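/- arXiv:1509.09218 — 5 statements merged into one kernel-verified Lean document; each statement's English description precedes it below -/
import Mathlib

section
/- Let m_K be the normalized Haar probability measure on K = SO(2) ⊆ SL(2,ℝ) and let η be the Borel measure on ℝ with density |t| with respect to Lebesgue measure. Let ν be the Borel measure on G = SL(2,ℝ) obtained as the pushforward of the product measure m_K × η × m_K under the map (k, t, k') ↦ k n_t k'. Then ν is a (left- and right-invariant) Haar measure on SL(2,ℝ), and for every r > 0, ν(B_r) = 2(cosh r − 1), where B_r = {g ∈ G : d(g·i, i) ≤ r}. -/
open MeasureTheory UpperHalfPlane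
open scoped ENNReal

noncomputable section

abbrev G : Type := Matrix.SpecialLinearGroup (Fin 2) ℝ

instance : TopologicalSpace G := instTopologicalSpaceSubtype
instance : MeasurableSpace G := borel G
instance : BorelSpace G := ⟨rfl⟩

/-- The rotation `k_θ ∈ SO(2) ⊆ SL(2,ℝ)`. -/
def kmat (θ : ℝ) : G :=
  ⟨!![Real.cos θ, -Real.sin θ; Real.sin θ, Real.cos θ], by
    rw [Matrix.det_fin_two_of]; nlinarith [Real.sin_sq_add_cos_sq θ]⟩

/-- The unipotent element `n_t ∈ SL(2,ℝ)`. -/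
def nmat (t : ℝ) : G :=
  ⟨!![1, t; 0, 1], by rw [Matrix.det_fin_two_of]; ring⟩

/-- The normalized Haar probability measure of `K = SO(2)`, realized as a measure
on `SL(2,ℝ)`: the pushforward of normalized Lebesgue measure on `[0, 2π)` under
`θ ↦ k_θ`. -/
def mK : Measure G :=
  Measure.map kmat
    ((ENNReal.ofReal (2 * Real.pi))⁻¹ • volume.restrict (Set.Ico 0 (2 * Real.pi)))

/-- The measure `η` on `ℝ` with density `|t|` with respect to Lebesgue measure. -/
def etaMeasure : Measure ℝ := volume.withDensity fun t => ENNReal.ofReal |t|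

/-- The pushforward `ν` of `m_K × η × m_K` under `(k, t, k') ↦ k n_t k'`. -/
def nuKNK : Measure G :=
  Measure.map (fun q : G × ℝ × G => q.1 * nmat q.2.1 * q.2.2)
    (mK.prod (etaMeasure.prod mK))

/-- The hyperbolic ball of radius `r` about the base point `i`, as a subset of `SL(2,ℝ)`. -/
def hypBall (r : ℝ) : Set G := {g : G | dist (g • (I : ℍ)) (I : ℍ) ≤ r}


lemma mul_entry (x y : G) (i j : Fin 2) :
    (x * y).1 i j = x.1 i 0 * y.1 0 j + x.1 i 1 * y.1 1 j := by
  rw [Matrix.SpecialLinearGroup.coe_mul, Matrix.mul_apply, Fin.sum_univ_two]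

lemma k00 (θ : ℝ) : (kmat θ).1 0 0 = Real.cos θ := rfl
lemma k01 (θ : ℝ) : (kmat θ).1 0 1 = -Real.sin θ := rfl
lemma k10 (θ : ℝ) : (kmat θ).1 1 0 = Real.sin θ := rfl
lemma k11 (θ : ℝ) : (kmat θ).1 1 1 = Real.cos θ := rfl
lemma n00 (θ : ℝ) : (nmat θ).1 0 0 = 1 := rfl
lemma n01 (θ : ℝ) : (nmat θ).1 0 1 = θ := rfl
lemma n10 (θ : ℝ) : (nmat θ).1 1 0 = 0 := rfl
lemma n11 (θ : ℝ) : (nmat θ).1 1 1 = 1 := rfl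

lemma G_ext {x y : G} (h00 : x.1 0 0 = y.1 0 0) (h01 : x.1 0 1 = y.1 0 1)
    (h10 : x.1 1 0 = y.1 1 0) (h11 : x.1 1 1 = y.1 1 1) : x = y := by
  apply Subtype.ext
  ext i j
  fin_cases i <;> fin_cases j
  exacts [h00, h01, h10, h11]

lemma continuous_toG {X : Type*} [TopologicalSpace X] {f : X → G}
    (h : ∀ i j, Continuous fun x => (f x).1 i j) : Continuous f := by
  refine Topology.IsInducing.subtypeVal.continuous_iff.2 ?_
  exact continuous_matrix h

lemma continuous_entry (i j : Fin 2) : Continuous fun g : G => g.1 i j :=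
  (continuous_subtype_val (p := fun A : Matrix (Fin 2) (Fin 2) ℝ => A.det = 1)).matrix_elem i j

instance instTopGrp : IsTopologicalGroup G where
  continuous_mul := by
    apply continuous_toG
    intro i j
    simp only [mul_entry]
    have h := continuous_entry
    have h1 : ∀ i j, Continuous fun g : G × G => g.1.1 i j := fun i j => (h i j).comp continuous_fst
    have h2 : ∀ i j, Continuous fun g : G × G => g.2.1 i j := fun i j => (h i j).comp continuous_snd
    exact ((h1 _ _).mul (h2 _ _)).add ((h1 _ _).mul (h2 _ _))
  continuous_inv := by
    apply continuous_toG
    intro i j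
    have h := continuous_entry
    simp only [Matrix.SpecialLinearGroup.SL2_inv_expl]
    fin_cases i <;> fin_cases j
    exacts [h 1 1, (h 0 1).neg, (h 1 0).neg, h 0 0]

instance instSC : SecondCountableTopology G :=
  haveI : SecondCountableTopology (Matrix (Fin 2) (Fin 2) ℝ) :=
    inferInstanceAs (SecondCountableTopology (Fin 2 → Fin 2 → ℝ))
  TopologicalSpace.Subtype.secondCountableTopology _

lemma continuous_kmat : Continuous kmat := by
  apply continuous_toG
  intro i j
  fin_cases i <;> fin_cases j <;> simp [kmat] <;> fun_prop

lemma continuous_nmat : Continuous nmat := by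
  apply continuous_toG
  intro i j
  fin_cases i <;> fin_cases j <;> simp [nmat] <;> fun_prop

lemma kmat_add (x y : ℝ) : kmat (x + y) = kmat x * kmat y := by
  apply G_ext <;> simp only [mul_entry, k00, k01, k10, k11, Real.cos_add, Real.sin_add] <;> ring

lemma kmat_two_pi : Function.Periodic kmat (2 * Real.pi) := by
  intro x
  apply Subtype.ext
  ext i j
  fin_cases i <;> fin_cases j <;> simp [kmat]

instance : IsProbabilityMeasure mK := by
  constructor
  have h : (2 : ℝ) * Real.pi > 0 := by positivity
  rw [mK, Measure.map_apply continuous_kmat.measurable MeasurableSet.univ]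
  simp only [Set.preimage_univ, Measure.smul_apply, Measure.restrict_apply_univ, Real.volume_Ico,
    sub_zero, smul_eq_mul]
  exact ENNReal.inv_mul_cancel (by simpa using h) ENNReal.ofReal_ne_top

lemma lintegral_mK {f : G → ℝ≥0∞} (hf : Measurable f) :
    ∫⁻ k, f k ∂mK = (ENNReal.ofReal (2 * Real.pi))⁻¹ *
      ∫⁻ x in Set.Ioc 0 (0 + 2 * Real.pi), f (kmat x) := by
  rw [mK, lintegral_map hf continuous_kmat.measurable, lintegral_smul_measure, smul_eq_mul,
    zero_add, Measure.restrict_congr_set Ico_ae_eq_Ioc]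

lemma lintegral_mK_mul_left {f : G → ℝ≥0∞} (hf : Measurable f) (θ : ℝ) :
    ∫⁻ k, f (kmat θ * k) ∂mK = ∫⁻ k, f k ∂mK := by
  have h : (2 : ℝ) * Real.pi > 0 := by positivity
  rw [lintegral_mK hf, lintegral_mK (f := fun k => f (kmat θ * k))
    (hf.comp (measurable_const_mul _))]
  congr 1
  simp_rw [← kmat_add]
  have h1 : ∫⁻ x in Set.Ioc 0 (0 + 2 * Real.pi), f (kmat (θ + x)) =
      ∫⁻ x in Set.Ioc θ (θ + 2 * Real.pi), f (kmat x) := by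
    rw [← lintegral_indicator measurableSet_Ioc, ← lintegral_indicator measurableSet_Ioc,
      ← lintegral_add_left_eq_self (μ := volume)
        ((Set.Ioc θ (θ + 2 * Real.pi)).indicator fun x => f (kmat x)) θ]
    congr 1
    ext x
    simp [Set.indicator]
  rw [h1]
  refine (isAddFundamentalDomain_Ioc h θ volume).setLIntegral_eq
    (isAddFundamentalDomain_Ioc h 0 volume) (fun x => f (kmat x)) ?_
  rintro ⟨g, hg⟩ x
  obtain ⟨n, rfl⟩ := AddSubgroup.mem_zmultiples_iff.1 hg
  have := (kmat_two_pi.zsmul n) x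
  simp only [AddSubgroup.mk_vadd, vadd_eq_add]
  rw [add_comm, this]

lemma lintegral_mK_mul_right {f : G → ℝ≥0∞} (hf : Measurable f) (θ : ℝ) :
    ∫⁻ k, f (k * kmat θ) ∂mK = ∫⁻ k, f k ∂mK := by
  rw [← lintegral_mK_mul_left hf θ, lintegral_mK (f := fun k => f (k * kmat θ))
    (hf.comp (measurable_mul_const _)), lintegral_mK (f := fun k => f (kmat θ * k))
    (hf.comp (measurable_const_mul _))]
  simp_rw [← kmat_add, add_comm]

/-- The half squared Frobenius norm. -/
def Fr (g : G) : ℝ := (g.1 0 0 ^ 2 + g.1 0 1 ^ 2 + g.1 1 0 ^ 2 + g.1 1 1 ^ 2) / 2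

lemma continuous_Fr : Continuous Fr := by
  have := continuous_entry
  unfold Fr
  fun_prop

lemma Fr_nmat (t : ℝ) : Fr (nmat t) = 1 + t ^ 2 / 2 := by
  simp [Fr, nmat]; ring

lemma det_eq (g : G) : g.1 0 0 * g.1 1 1 - g.1 0 1 * g.1 1 0 = 1 := by
  rw [← Matrix.det_fin_two]; exact g.2

lemma polar_G (g : G) : ∃ ψ χ : ℝ,
    g.1 0 0 = √((Fr g + 1) / 2) * Real.cos ψ + √((Fr g - 1) / 2) * Real.cos χ ∧
    g.1 0 1 = √((Fr g - 1) / 2) * Real.sin χ - √((Fr g + 1) / 2) * Real.sin ψ ∧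
    g.1 1 0 = √((Fr g - 1) / 2) * Real.sin χ + √((Fr g + 1) / 2) * Real.sin ψ ∧
    g.1 1 1 = √((Fr g + 1) / 2) * Real.cos ψ - √((Fr g - 1) / 2) * Real.cos χ := by
  have hd := det_eq g
  unfold Fr
  generalize g.1 0 0 = a at *
  generalize g.1 0 1 = b at *
  generalize g.1 1 0 = c at *
  generalize g.1 1 1 = d at *
  have hz : ‖(⟨(a + d) / 2, (c - b) / 2⟩ : ℂ)‖ =
      √(((a ^ 2 + b ^ 2 + c ^ 2 + d ^ 2) / 2 + 1) / 2) := by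
    rw [Complex.norm_def, Complex.normSq_mk]; congr 1; linarith
  have hw : ‖(⟨(a - d) / 2, (c + b) / 2⟩ : ℂ)‖ =
      √(((a ^ 2 + b ^ 2 + c ^ 2 + d ^ 2) / 2 - 1) / 2) := by
    rw [Complex.norm_def, Complex.normSq_mk]; congr 1; linarith
  refine ⟨Complex.arg ⟨(a + d) / 2, (c - b) / 2⟩, Complex.arg ⟨(a - d) / 2, (c + b) / 2⟩, ?_⟩
  rw [← hz, ← hw]
  simp only [Complex.norm_mul_cos_arg, Complex.norm_mul_sin_arg]
  refine ⟨?_, ?_, ?_, ?_⟩ <;> ring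

lemma cartan (g g' : G) (h : Fr g = Fr g') : ∃ θ θ' : ℝ, g' = kmat θ * g * kmat θ' := by
  obtain ⟨ψ, χ, h1, h2, h3, h4⟩ := polar_G g
  obtain ⟨ψ', χ', h1', h2', h3', h4'⟩ := polar_G g'
  rw [← h] at h1' h2' h3' h4'
  generalize √((Fr g + 1) / 2) = P at *
  generalize √((Fr g - 1) / 2) = Q at *
  obtain ⟨θ, θ', e1, e2⟩ : ∃ θ θ' : ℝ, ψ' = ψ + θ + θ' ∧ χ' = χ + θ - θ' :=
    ⟨(ψ' - ψ + (χ' - χ)) / 2, (ψ' - ψ - (χ' - χ)) / 2, by ring, by ring⟩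
  refine ⟨θ, θ', ?_⟩
  apply G_ext <;> simp only [mul_entry, k00, k01, k10, k11] <;>
    simp only [h1, h2, h3, h4, h1', h2', h3', h4', e1, e2, Real.cos_add, Real.sin_add,
      Real.cos_sub, Real.sin_sub] <;> ring

lemma Fr_kgk (θ θ' : ℝ) (g : G) : Fr (kmat θ * g * kmat θ') = Fr g := by
  have h1 := Real.sin_sq_add_cos_sq θ
  have h2 := Real.sin_sq_add_cos_sq θ'
  simp only [Fr, mul_entry, k00, k01, k10, k11]
  generalize g.1 0 0 = a at *
  generalize g.1 0 1 = b at *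
  generalize g.1 1 0 = c at *
  generalize g.1 1 1 = d at *
  generalize Real.sin θ = s at *
  generalize Real.cos θ = k at *
  generalize Real.sin θ' = s' at *
  generalize Real.cos θ' = k' at *
  have : (a ^ 2 + b ^ 2 + c ^ 2 + d ^ 2) / 2 =
    (s ^ 2 + k ^ 2) * (s' ^ 2 + k' ^ 2) * (a ^ 2 + b ^ 2 + c ^ 2 + d ^ 2) / 2 := by
      rw [h1, h2]; ring
  rw [this]; ring

lemma one_le_Fr (g : G) : 1 ≤ Fr g := by
  have := det_eq g
  unfold Fr
  nlinarith [sq_nonneg (g.1 0 0 - g.1 1 1), sq_nonneg (g.1 0 1 + g.1 1 0)]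

lemma cosh_dist_eq (g : G) : Real.cosh (dist (g • (I : ℍ)) (I : ℍ)) = Fr g := by
  have hd := det_eq g
  have h0 : (g.1 1 0) ^ 2 + (g.1 1 1) ^ 2 ≠ 0 := by
    intro h
    have h1 : g.1 1 0 = 0 := by nlinarith [sq_nonneg (g.1 1 0), sq_nonneg (g.1 1 1)]
    have h2 : g.1 1 1 = 0 := by nlinarith [sq_nonneg (g.1 1 0), sq_nonneg (g.1 1 1)]
    rw [h1, h2] at hd; norm_num at hd
  have hre : ((g • (I : ℍ) : ℍ) : ℂ).re =
      (g.1 0 0 * g.1 1 0 + g.1 0 1 * g.1 1 1) / ((g.1 1 0) ^ 2 + (g.1 1 1) ^ 2) := by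
    rw [UpperHalfPlane.coe_specialLinearGroup_apply]
    simp [Complex.div_re, Complex.normSq_apply]
    rw [← add_div, show g.1 1 1 * g.1 1 1 + g.1 1 0 * g.1 1 0 = g.1 1 0 ^ 2 + g.1 1 1 ^ 2 by ring,
      add_comm]
  have him : ((g • (I : ℍ) : ℍ) : ℂ).im = 1 / ((g.1 1 0) ^ 2 + (g.1 1 1) ^ 2) := by
    rw [UpperHalfPlane.coe_specialLinearGroup_apply]
    simp [Complex.div_im, Complex.normSq_apply]
    rw [← sub_div, show g.1 1 1 * g.1 1 1 + g.1 1 0 * g.1 1 0 = g.1 1 0 ^ 2 + g.1 1 1 ^ 2 by ring]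
    rw [div_eq_iff h0, inv_mul_cancel₀ h0]
    linarith
  rw [UpperHalfPlane.cosh_dist, Complex.dist_eq, ← Complex.normSq_eq_norm_sq, Complex.normSq_apply,
    Complex.sub_re, Complex.sub_im, hre, him, ← UpperHalfPlane.coe_im, him]
  unfold Fr
  generalize g.1 0 0 = a at *
  generalize g.1 0 1 = b at *
  generalize g.1 1 0 = c at *
  generalize g.1 1 1 = d at *
  simp
  have hkey : (a * c + b * d) ^ 2 + 1 = (a ^ 2 + b ^ 2) * (c ^ 2 + d ^ 2) := by
    have : (1 : ℝ) = (a * d - b * c) ^ 2 := by rw [hd]; norm_num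
    rw [this]; ring
  field_simp
  linear_combination hkey

abbrev V4 : Type := Fin 4 → ℝ

/-- determinant on `V4`. -/
def dt (A : V4) : ℝ := A 0 * A 3 - A 1 * A 2

lemma continuous_dt : Continuous dt := by unfold dt; fun_prop

/-- Matrix with given entries. -/
def mkG (a b c d : ℝ) (h : a * d - b * c = 1) : G :=
  ⟨!![a, b; c, d], by rw [Matrix.det_fin_two_of]; exact h⟩

lemma prj_aux {A : V4} (h : 0 < dt A) : A 0 / √(dt A) * (A 3 / √(dt A)) -
    A 1 / √(dt A) * (A 2 / √(dt A)) = 1 := by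
  have h1 : √(dt A) ≠ 0 := (Real.sqrt_pos.2 h).ne'
  have h2 : √(dt A) ^ 2 = dt A := Real.sq_sqrt h.le
  field_simp
  rw [h2]; rfl

open Classical in
/-- radial projection to `G`. -/
def prj (A : V4) : G :=
  if h : 0 < dt A then
    mkG (A 0 / √(dt A)) (A 1 / √(dt A)) (A 2 / √(dt A)) (A 3 / √(dt A)) (prj_aux h)
  else 1

lemma prj00 {A : V4} (h : 0 < dt A) : (prj A).1 0 0 = A 0 / √(dt A) := by
  rw [prj, dif_pos h]; rfl

lemma prj01 {A : V4} (h : 0 < dt A) : (prj A).1 0 1 = A 1 / √(dt A) := by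
  rw [prj, dif_pos h]; rfl

lemma prj10 {A : V4} (h : 0 < dt A) : (prj A).1 1 0 = A 2 / √(dt A) := by
  rw [prj, dif_pos h]; rfl

lemma prj11 {A : V4} (h : 0 < dt A) : (prj A).1 1 1 = A 3 / √(dt A) := by
  rw [prj, dif_pos h]; rfl

lemma measurable_toG {X : Type*} [MeasurableSpace X] {f : X → G}
    (h : ∀ i j, Measurable fun x => (f x).1 i j) : Measurable f := by
  have h1 : (inferInstance : MeasurableSpace G) =
      MeasurableSpace.comap (fun g : G => (fun i j => g.1 i j : Fin 2 → Fin 2 → ℝ)) inferInstance := by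
    have e : (inferInstance : MeasurableSpace (Fin 2 → Fin 2 → ℝ)) = borel _ := BorelSpace.measurable_eq
    rw [e, ← borel_comap]
    rfl
  intro s hs
  have hs' : MeasurableSet[MeasurableSpace.comap
    (fun g : G => (fun i j => g.1 i j : Fin 2 → Fin 2 → ℝ)) inferInstance] s := h1 ▸ hs
  obtain ⟨t, ht, rfl⟩ := hs'
  rw [← Set.preimage_comp]
  exact (measurable_pi_lambda _ fun i => measurable_pi_lambda _ fun j => h i j) ht

lemma measurable_prj : Measurable prj := by
  have hS : MeasurableSet {A : V4 | 0 < dt A} :=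
    measurableSet_lt measurable_const continuous_dt.measurable
  have hd := continuous_dt.measurable
  have key : ∀ (k : Fin 4) (c : ℝ), Measurable fun A : V4 => open Classical in
      if 0 < dt A then A k / √(dt A) else c := by
    intro k c
    refine Measurable.ite hS ?_ measurable_const
    exact (measurable_pi_apply k).div hd.sqrt
  apply measurable_toG
  intro i j
  fin_cases i <;> fin_cases j
  · convert key 0 1 using 2 with A
    by_cases h : 0 < dt A
    · simp only [h, if_true]; exact prj00 h
    · simp [h, prj]
  · convert key 1 0 using 2 with A
    by_cases h : 0 < dt A
    · simp only [h, if_true]; exact prj01 h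
    · simp [h, prj]
  · convert key 2 0 using 2 with A
    by_cases h : 0 < dt A
    · simp only [h, if_true]; exact prj10 h
    · simp [h, prj]
  · convert key 3 1 using 2 with A
    by_cases h : 0 < dt A
    · simp only [h, if_true]; exact prj11 h
    · simp [h, prj]

/-- The cone. -/
def cone : Set V4 := {A | 0 < dt A ∧ dt A ≤ 1}

lemma measurableSet_cone : MeasurableSet cone :=
  (measurableSet_lt measurable_const continuous_dt.measurable).inter
    (measurableSet_le continuous_dt.measurable measurable_const)

/-- The cone measure. -/
def mC : Measure G := Measure.map prj (volume.restrict cone)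

def LM (g : G) : Matrix (Fin 4) (Fin 4) ℝ :=
  !![g.1 0 0, 0, g.1 0 1, 0; 0, g.1 0 0, 0, g.1 0 1; g.1 1 0, 0, g.1 1 1, 0; 0, g.1 1 0, 0, g.1 1 1]

def RM (g : G) : Matrix (Fin 4) (Fin 4) ℝ :=
  !![g.1 0 0, g.1 1 0, 0, 0; g.1 0 1, g.1 1 1, 0, 0; 0, 0, g.1 0 0, g.1 1 0; 0, 0, g.1 0 1, g.1 1 1]

lemma det_LM (g : G) : (LM g).det = 1 := by
  have hd := det_eq g
  unfold LM
  simp [Matrix.det_succ_row_zero, Fin.sum_univ_succ, Fin.succAbove]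
  linear_combination (g.1 0 0 * g.1 1 1 - g.1 0 1 * g.1 1 0 + 1) * hd

lemma det_RM (g : G) : (RM g).det = 1 := by
  have hd := det_eq g
  unfold RM
  simp [Matrix.det_succ_row_zero, Fin.sum_univ_succ, Fin.succAbove]
  linear_combination (g.1 0 0 * g.1 1 1 - g.1 0 1 * g.1 1 0 + 1) * hd

lemma mC_inv_aux (M : Matrix (Fin 4) (Fin 4) ℝ) (hM : M.det = 1) (φ : G → G) (hφ : Measurable φ)
    (h1 : ∀ A, dt (Matrix.toLin' M A) = dt A)
    (h2 : ∀ A, 0 < dt A → prj (Matrix.toLin' M A) = φ (prj A)) : Measure.map φ mC = mC := by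
  have hc : Continuous (Matrix.toLin' M) := LinearMap.continuous_of_finiteDimensional _
  have hmap : Measure.map (Matrix.toLin' M) (volume : Measure V4) = volume := by
    rw [Real.map_matrix_volume_pi_eq_smul_volume_pi (by rw [hM]; norm_num), hM]
    simp
  have hpre : Matrix.toLin' M ⁻¹' cone = cone := by
    ext A; simp only [cone, Set.mem_preimage, Set.mem_ofPred_eq, h1]
  have hres : Measure.map (Matrix.toLin' M) (volume.restrict cone) = volume.restrict cone := by
    conv_rhs => rw [← hmap, Measure.restrict_map hc.measurable measurableSet_cone, hpre]
  rw [mC, Measure.map_map hφ measurable_prj]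
  conv_rhs => rw [← hres, Measure.map_map measurable_prj hc.measurable]
  apply Measure.map_congr
  filter_upwards [ae_restrict_mem measurableSet_cone] with A hA
  exact (h2 A hA.1).symm

lemma mC_left (g : G) : Measure.map (fun x => g * x) mC = mC := by
  have hd := det_eq g
  have e0 : ∀ A, Matrix.toLin' (LM g) A 0 = g.1 0 0 * A 0 + g.1 0 1 * A 2 := by
    intro A; simp [LM, Matrix.mulVec, dotProduct, Fin.sum_univ_succ]
  have e1 : ∀ A, Matrix.toLin' (LM g) A 1 = g.1 0 0 * A 1 + g.1 0 1 * A 3 := by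
    intro A; simp [LM, Matrix.mulVec, dotProduct, Fin.sum_univ_succ]
  have e2 : ∀ A, Matrix.toLin' (LM g) A 2 = g.1 1 0 * A 0 + g.1 1 1 * A 2 := by
    intro A; simp [LM, Matrix.mulVec, dotProduct, Fin.sum_univ_succ]
  have e3 : ∀ A, Matrix.toLin' (LM g) A 3 = g.1 1 0 * A 1 + g.1 1 1 * A 3 := by
    intro A; simp [LM, Matrix.mulVec, dotProduct, Fin.sum_univ_succ]
  have h1 : ∀ A, dt (Matrix.toLin' (LM g) A) = dt A := by
    intro A
    simp only [dt, e0, e1, e2, e3]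
    linear_combination (A 0 * A 3 - A 1 * A 2) * hd
  refine mC_inv_aux (LM g) (det_LM g) _ (measurable_const_mul g) h1 ?_
  intro A hA
  have hA' : 0 < dt (Matrix.toLin' (LM g) A) := by rwa [h1]
  apply G_ext <;> simp only [mul_entry, prj00 hA, prj01 hA, prj10 hA, prj11 hA, prj00 hA',
    prj01 hA', prj10 hA', prj11 hA', h1, e0, e1, e2, e3] <;> ring

lemma mC_right (g : G) : Measure.map (fun x => x * g) mC = mC := by
  have hd := det_eq g
  have e0 : ∀ A, Matrix.toLin' (RM g) A 0 = g.1 0 0 * A 0 + g.1 1 0 * A 1 := by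
    intro A; simp [RM, Matrix.mulVec, dotProduct, Fin.sum_univ_succ]
  have e1 : ∀ A, Matrix.toLin' (RM g) A 1 = g.1 0 1 * A 0 + g.1 1 1 * A 1 := by
    intro A; simp [RM, Matrix.mulVec, dotProduct, Fin.sum_univ_succ]
  have e2 : ∀ A, Matrix.toLin' (RM g) A 2 = g.1 0 0 * A 2 + g.1 1 0 * A 3 := by
    intro A; simp [RM, Matrix.mulVec, dotProduct, Fin.sum_univ_succ]
  have e3 : ∀ A, Matrix.toLin' (RM g) A 3 = g.1 0 1 * A 2 + g.1 1 1 * A 3 := by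
    intro A; simp [RM, Matrix.mulVec, dotProduct, Fin.sum_univ_succ]
  have h1 : ∀ A, dt (Matrix.toLin' (RM g) A) = dt A := by
    intro A
    simp only [dt, e0, e1, e2, e3]
    linear_combination (A 0 * A 3 - A 1 * A 2) * hd
  refine mC_inv_aux (RM g) (det_RM g) _ (measurable_mul_const g) h1 ?_
  intro A hA
  have hA' : 0 < dt (Matrix.toLin' (RM g) A) := by rwa [h1]
  apply G_ext <;> simp only [mul_entry, prj00 hA, prj01 hA, prj10 hA, prj11 hA, prj00 hA',
    prj01 hA', prj10 hA', prj11 hA', h1, e0, e1, e2, e3] <;> ring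

lemma sq_sub (h : ℝ → ℝ≥0∞) (c : ℝ) (hc : 0 < c) :
    ∫⁻ x in Set.Ioi 0, h x = ∫⁻ r in Set.Ioi 0, ENNReal.ofReal (2 * c * r) * h (c * r ^ 2) := by
  have him : (fun r : ℝ => c * r ^ 2) '' Set.Ioi 0 = Set.Ioi 0 := by
    ext x
    simp only [Set.mem_image, Set.mem_Ioi]
    constructor
    · rintro ⟨r, hr, rfl⟩; positivity
    · intro hx
      refine ⟨√(x / c), Real.sqrt_pos.2 (by positivity), ?_⟩
      rw [Real.sq_sqrt (by positivity)]; field_simp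
  have := lintegral_image_eq_lintegral_abs_deriv_mul (s := Set.Ioi 0)
    (f := fun r : ℝ => c * r ^ 2) (f' := fun r => 2 * c * r) measurableSet_Ioi
    (fun x _ => by
      exact (((hasDerivAt_pow 2 x).const_mul c).congr_deriv (by push_cast; ring)).hasDerivWithinAt)
    (by
      intro x hx y hy hxy
      simp only [Set.mem_Ioi] at hx hy
      have h2 : x ^ 2 = y ^ 2 := mul_left_cancel₀ hc.ne' hxy
      exact (pow_left_inj₀ hx.le hy.le two_ne_zero).1 h2) h
  rw [him] at this
  rw [this]
  refine setLIntegral_congr_fun measurableSet_Ioi fun r hr => ?_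
  simp only [Set.mem_Ioi] at hr
  rw [abs_of_pos (by positivity)]

lemma nsq (h : ℝ → ℝ≥0∞) (hh : Measurable h) :
    ∫⁻ z : ℂ, h (Complex.normSq z) = ENNReal.ofReal Real.pi * ∫⁻ x in Set.Ioi 0, h x := by
  rw [← Complex.lintegral_comp_polarCoord_symm]
  have h1 : ∀ p : ℝ × ℝ, Complex.normSq (Complex.polarCoord.symm p) = p.1 ^ 2 := by
    intro p
    rw [Complex.normSq_eq_norm_sq, Complex.norm_polarCoord_symm, sq_abs]
  simp_rw [h1]
  have h2 : (polarCoord.target : Set (ℝ × ℝ)) = Set.Ioi 0 ×ˢ Set.Ioo (-Real.pi) Real.pi := rfl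
  rw [h2, Measure.volume_eq_prod, ← Measure.prod_restrict]
  have := lintegral_prod_mul (μ := volume.restrict (Set.Ioi (0:ℝ)))
    (ν := volume.restrict (Set.Ioo (-Real.pi) Real.pi))
    (f := fun r => ENNReal.ofReal r * h (r ^ 2)) (g := fun _ => 1)
    (by fun_prop) (by fun_prop)
  simp only [mul_one] at this
  simp only [smul_eq_mul]
  rw [this, sq_sub h 1 one_pos]
  simp only [lintegral_const, Measure.restrict_apply_univ, Real.volume_Ioo, one_mul, mul_one]
  have : ∀ r : ℝ, ENNReal.ofReal (2 * r) * h (r ^ 2) = 2 * (ENNReal.ofReal r * h (r ^ 2)) := by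
    intro r
    rw [ENNReal.ofReal_mul (by norm_num), mul_assoc]; simp
  simp_rw [this]
  rw [lintegral_const_mul _ (by fun_prop), ← mul_assoc, mul_comm]
  congr 1
  rw [show Real.pi - -Real.pi = Real.pi * 2 by ring, ENNReal.ofReal_mul Real.pi_pos.le]; simp

lemma two_nsq (H : ℝ × ℝ → ℝ≥0∞) (hH : Measurable H) :
    ∫⁻ x : ℂ × ℂ, H (Complex.normSq x.1, Complex.normSq x.2) =
      ENNReal.ofReal Real.pi * (ENNReal.ofReal Real.pi *
        ∫⁻ X in Set.Ioi 0, ∫⁻ Y in Set.Ioi 0, H (X, Y)) := by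
  have hn : Measurable Complex.normSq := Complex.continuous_normSq.measurable
  rw [Measure.volume_eq_prod, lintegral_prod _ (by fun_prop)]
  simp only
  have h1 : ∀ z : ℂ, ∫⁻ w : ℂ, H (Complex.normSq z, Complex.normSq w) =
      ENNReal.ofReal Real.pi * ∫⁻ Y in Set.Ioi 0, H (Complex.normSq z, Y) := by
    intro z
    exact nsq (fun Y => H (Complex.normSq z, Y)) (by fun_prop)
  simp_rw [h1]
  have h2 : Measurable fun X => ∫⁻ Y in Set.Ioi 0, H (X, Y) := hH.lintegral_prod_right'
  rw [lintegral_const_mul (f := fun z : ℂ => ∫⁻ Y in Set.Ioi 0, H (Complex.normSq z, Y)) _ (h2.comp hn)]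
  congr 1
  exact nsq _ h2

lemma lintegral_eta (f : ℝ → ℝ≥0∞) (hf : Measurable f) :
    ∫⁻ t, f t ∂etaMeasure = ∫⁻ t, ENNReal.ofReal |t| * f t := by
  rw [etaMeasure, lintegral_withDensity_eq_lintegral_mul _ (by fun_prop) hf]
  rfl

lemma eta_even (f : ℝ → ℝ≥0∞) (hf : Measurable f) (he : ∀ t, f (-t) = f t) :
    ∫⁻ t, f t ∂etaMeasure = 2 * ∫⁻ t in Set.Ioi 0, ENNReal.ofReal t * f t := by
  rw [lintegral_eta f hf, ← lintegral_add_compl _ (measurableSet_Ioi (a := (0:ℝ))), two_mul]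
  congr 1
  · exact setLIntegral_congr_fun measurableSet_Ioi fun r hr => by
      simp only [abs_of_pos (Set.mem_Ioi.1 hr)]
  · rw [Set.compl_Ioi, Measure.restrict_congr_set Iio_ae_eq_Iic.symm,
      ← lintegral_indicator measurableSet_Iio, ← lintegral_neg_eq_self,
      ← lintegral_indicator measurableSet_Ioi]
    congr 1
    ext t
    by_cases ht : 0 < t
    · simp [Set.indicator, ht, he, abs_of_pos ht]
    · simp [Set.indicator, ht]

lemma c1_eq : ∫⁻ D in Set.Ioc (0:ℝ) 1, ENNReal.ofReal (D / 2) = ENNReal.ofReal (1 / 4) := by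
  rw [← ofReal_integral_eq_lintegral_ofReal]
  · rw [← intervalIntegral.integral_of_le (by norm_num)]
    congr 1
    simp; norm_num
  · exact (Continuous.integrableOn_Icc (by fun_prop)).mono_set Set.Ioc_subset_Icc_self
  · filter_upwards [ae_restrict_mem measurableSet_Ioc] with D hD
    have := hD.1
    simp only [Pi.zero_apply]; positivity

lemma quad (φ : ℝ → ℝ≥0∞) (hφ : Measurable φ) :
    ∫⁻ X in Set.Ioi (0:ℝ), ∫⁻ Y in Set.Ioi (0:ℝ),
      (Set.Ioc (0:ℝ) 1).indicator (fun _ => φ ((X + Y) / (X - Y))) (X - Y) =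
    ENNReal.ofReal (1 / 4) * ∫⁻ t in Set.Ioi 0, ENNReal.ofReal t * φ (1 + t ^ 2 / 2) := by
  have hm : Measurable fun p : ℝ × ℝ =>
      (Set.Ioc (0:ℝ) 1).indicator (fun _ => φ ((p.1 + p.2) / (p.1 - p.2))) (p.1 - p.2) := by
    have : (fun p : ℝ × ℝ =>
      (Set.Ioc (0:ℝ) 1).indicator (fun _ => φ ((p.1 + p.2) / (p.1 - p.2))) (p.1 - p.2)) =
      ((fun p : ℝ × ℝ => p.1 - p.2) ⁻¹' Set.Ioc (0:ℝ) 1).indicator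
        (fun p => φ ((p.1 + p.2) / (p.1 - p.2))) := by
      ext p; simp [Set.indicator]
    rw [this]
    exact Measurable.indicator (by fun_prop)
      ((measurable_fst.sub measurable_snd) measurableSet_Ioc)
  rw [lintegral_lintegral_swap (by exact hm.aemeasurable)]
  have h1 : ∀ Y ∈ Set.Ioi (0:ℝ), ∫⁻ X in Set.Ioi (0:ℝ),
      (Set.Ioc (0:ℝ) 1).indicator (fun _ => φ ((X + Y) / (X - Y))) (X - Y) =
      ∫⁻ D in Set.Ioc (0:ℝ) 1, φ ((D + 2 * Y) / D) := by
    intro Y hY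
    simp only [Set.mem_Ioi] at hY
    rw [← lintegral_indicator measurableSet_Ioc, ← lintegral_indicator measurableSet_Ioi,
      ← lintegral_sub_right_eq_self (μ := volume)
        ((Set.Ioc (0:ℝ) 1).indicator fun D => φ ((D + 2 * Y) / D)) Y]
    congr 1
    ext X
    by_cases hX : X - Y ∈ Set.Ioc (0:ℝ) 1
    · have hX0 : X ∈ Set.Ioi (0:ℝ) := by
        have := hX.1
        simp only [Set.mem_Ioi]; linarith
      rw [Set.indicator_of_mem hX0, Set.indicator_of_mem hX, Set.indicator_of_mem hX]
      congr 2; ring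
    · rw [Set.indicator_of_notMem (s := Set.Ioc (0:ℝ) 1) hX]
      rw [Set.indicator_apply]
      simp only [Set.indicator_of_notMem hX, ite_self]
  rw [setLIntegral_congr_fun measurableSet_Ioi h1]
  rw [lintegral_lintegral_swap (by
    have : Measurable fun p : ℝ × ℝ => φ ((p.2 + 2 * p.1) / p.2) := by fun_prop
    exact this.aemeasurable)]
  have h2 : ∀ D ∈ Set.Ioc (0:ℝ) 1, ∫⁻ Y in Set.Ioi (0:ℝ), φ ((D + 2 * Y) / D) =
      ENNReal.ofReal (D / 2) * ∫⁻ t in Set.Ioi 0, ENNReal.ofReal t * φ (1 + t ^ 2 / 2) := by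
    intro D hD
    have hD0 := hD.1
    rw [sq_sub (fun Y => φ ((D + 2 * Y) / D)) (D / 4) (by positivity),
      ← lintegral_const_mul _ (by fun_prop)]
    refine lintegral_congr fun r => ?_
    rw [← mul_assoc (ENNReal.ofReal (D / 2)), ← ENNReal.ofReal_mul (by positivity)]
    congr 2
    · ring
    · field_simp
      ring
  rw [setLIntegral_congr_fun measurableSet_Ioc h2, lintegral_mul_const _ (by fun_prop), c1_eq]

/-- Coordinates. -/
def eL : (ℂ × ℂ) ≃ₗ[ℝ] V4 where
  toFun x := ![x.1.re + x.2.re, x.2.im - x.1.im, x.2.im + x.1.im, x.1.re - x.2.re]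
  invFun A := (⟨(A 0 + A 3) / 2, (A 2 - A 1) / 2⟩, ⟨(A 0 - A 3) / 2, (A 1 + A 2) / 2⟩)
  map_add' x y := by
    ext i; fin_cases i <;> simp <;> ring
  map_smul' x y := by
    ext i; fin_cases i <;> simp <;> ring
  left_inv x := by
    ext <;> simp
  right_inv A := by
    ext i; fin_cases i <;> simp <;> ring

lemma dt_eL (x : ℂ × ℂ) : dt (eL x) = Complex.normSq x.1 - Complex.normSq x.2 := by
  simp [dt, eL, Complex.normSq_apply]; ring

lemma exists_coord_const : ∃ c : ℝ≥0∞, c ≠ 0 ∧ c ≠ ∞ ∧ ∀ f : V4 → ℝ≥0∞, Measurable f →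
    ∫⁻ A, f A = c * ∫⁻ x : ℂ × ℂ, f (eL x) := by
  let e := eL.toContinuousLinearEquiv
  haveI : (volume : Measure (ℂ × ℂ)).IsAddHaarMeasure := by
    rw [Measure.volume_eq_prod]; infer_instance
  haveI : (Measure.map e volume).IsAddHaarMeasure := e.isAddHaarMeasure_map volume
  have h := Measure.isAddLeftInvariant_eq_smul (volume : Measure V4) (Measure.map e volume)
  have hp := Measure.addHaarScalarFactor_pos_of_isAddHaarMeasure
    (volume : Measure V4) (Measure.map e volume)
  refine ⟨(Measure.addHaarScalarFactor (volume : Measure V4) (Measure.map e volume) : ℝ≥0∞),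
    by exact_mod_cast hp.ne', ENNReal.coe_ne_top, ?_⟩
  intro f hf
  conv_lhs => rw [h]
  rw [lintegral_smul_measure, lintegral_map hf e.continuous.measurable]
  rfl

lemma Fr_prj {A : V4} (h : 0 < dt A) :
    Fr (prj A) = (A 0 ^ 2 + A 1 ^ 2 + A 2 ^ 2 + A 3 ^ 2) / 2 / dt A := by
  simp only [Fr, prj00 h, prj01 h, prj10 h, prj11 h, div_pow, Real.sq_sqrt h.le]
  ring

lemma radial : ∃ C : ℝ≥0∞, C ≠ 0 ∧ C ≠ ∞ ∧ ∀ φ : ℝ → ℝ≥0∞, Measurable φ →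
    ∫⁻ g, φ (Fr g) ∂mC = C * ∫⁻ t, φ (1 + t ^ 2 / 2) ∂etaMeasure := by
  obtain ⟨c, hc0, hct, hc⟩ := exists_coord_const
  have hpi : ENNReal.ofReal Real.pi ≠ 0 := by simpa using Real.pi_pos
  have h4 : ENNReal.ofReal (1 / 4) ≠ 0 := by simp
  refine ⟨c * (ENNReal.ofReal Real.pi * (ENNReal.ofReal Real.pi * (ENNReal.ofReal (1 / 4) * 2⁻¹))),
    ?_, ?_, ?_⟩
  · simp only [ne_eq, mul_eq_zero, not_or]
    exact ⟨hc0, hpi, hpi, h4, by simp⟩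
  · exact ENNReal.mul_ne_top hct (ENNReal.mul_ne_top ENNReal.ofReal_ne_top
      (ENNReal.mul_ne_top ENNReal.ofReal_ne_top (ENNReal.mul_ne_top ENNReal.ofReal_ne_top
        (by simp))))
  intro φ hφ
  have hm : Measurable fun p : ℝ × ℝ =>
      (Set.Ioc (0:ℝ) 1).indicator (fun _ => φ ((p.1 + p.2) / (p.1 - p.2))) (p.1 - p.2) := by
    have : (fun p : ℝ × ℝ =>
      (Set.Ioc (0:ℝ) 1).indicator (fun _ => φ ((p.1 + p.2) / (p.1 - p.2))) (p.1 - p.2)) =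
      ((fun p : ℝ × ℝ => p.1 - p.2) ⁻¹' Set.Ioc (0:ℝ) 1).indicator
        (fun p => φ ((p.1 + p.2) / (p.1 - p.2))) := by
      ext p; simp [Set.indicator]
    rw [this]
    exact Measurable.indicator (by fun_prop)
      ((measurable_fst.sub measurable_snd) measurableSet_Ioc)
  have hF : Measurable Fr := continuous_Fr.measurable
  rw [mC, lintegral_map (by fun_prop) measurable_prj, ← lintegral_indicator measurableSet_cone,
    hc (cone.indicator fun A => φ (Fr (prj A)))
      (Measurable.indicator ((hφ.comp hF).comp measurable_prj) measurableSet_cone)]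
  have h1 : ∀ x : ℂ × ℂ, cone.indicator (fun A => φ (Fr (prj A))) (eL x) =
      (fun p : ℝ × ℝ => (Set.Ioc (0:ℝ) 1).indicator (fun _ => φ ((p.1 + p.2) / (p.1 - p.2)))
        (p.1 - p.2)) (Complex.normSq x.1, Complex.normSq x.2) := by
    intro x
    simp only
    rw [← dt_eL]
    by_cases hx : eL x ∈ cone
    · have hx' : dt (eL x) ∈ Set.Ioc (0:ℝ) 1 := hx
      rw [Set.indicator_of_mem hx, Set.indicator_of_mem hx', Fr_prj hx'.1]
      congr 2
      simp [eL, Complex.normSq_apply]; ring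
    · have hx' : dt (eL x) ∉ Set.Ioc (0:ℝ) 1 := hx
      rw [Set.indicator_of_notMem hx, Set.indicator_of_notMem hx']
  rw [lintegral_congr h1, two_nsq _ hm, quad φ hφ, eta_even _ (by fun_prop) (by simp)]
  simp only [mul_assoc]
  rw [← mul_assoc 2⁻¹ 2, ENNReal.inv_mul_cancel (by simp) (by simp), one_mul]

instance : SFinite etaMeasure := by unfold etaMeasure; infer_instance
instance : SFinite mC := by unfold mC; infer_instance

/-- Bi-average over `K`. -/
def fb (f : G → ℝ≥0∞) (g : G) : ℝ≥0∞ := ∫⁻ k, ∫⁻ k', f (k * g * k') ∂mK ∂mK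

lemma measurable_fb_aux (f : G → ℝ≥0∞) (hf : Measurable f) :
    Measurable fun p : G × G => ∫⁻ k', f (p.2 * p.1 * k') ∂mK := by
  have h : Measurable fun q : (G × G) × G => f (q.1.2 * q.1.1 * q.2) := by fun_prop
  exact h.lintegral_prod_right'

lemma measurable_fb (f : G → ℝ≥0∞) (hf : Measurable f) : Measurable (fb f) :=
  (measurable_fb_aux f hf).lintegral_prod_right'

lemma fb_congr (f : G → ℝ≥0∞) (hf : Measurable f) {g g' : G} (h : Fr g = Fr g') :
    fb f g' = fb f g := by
  obtain ⟨θ, θ', rfl⟩ := cartan g g' h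
  unfold fb
  have h1 : ∀ k : G, ∫⁻ k', f (k * (kmat θ * g * kmat θ') * k') ∂mK =
      ∫⁻ k', f (k * kmat θ * g * k') ∂mK := by
    intro k
    have hmk : Measurable fun k' => f (k * kmat θ * g * k') := by fun_prop
    have h2 := lintegral_mK_mul_left hmk θ'
    refine Eq.trans (lintegral_congr fun k' => ?_) h2
    have h3 : k * (kmat θ * g * kmat θ') * k' = k * kmat θ * g * (kmat θ' * k') := by group
    rw [h3]
  simp_rw [h1]
  have hm : Measurable fun k => ∫⁻ k', f (k * g * k') ∂mK := by
    have h4 : Measurable fun q : G × G => f (q.1 * g * q.2) := by fun_prop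
    exact h4.lintegral_prod_right'
  exact lintegral_mK_mul_right hm θ

lemma lintegral_nu (f : G → ℝ≥0∞) (hf : Measurable f) :
    ∫⁻ g, f g ∂nuKNK = ∫⁻ t, fb f (nmat t) ∂etaMeasure := by
  have hn := continuous_nmat.measurable
  have hm : Measurable fun q : G × ℝ × G => q.1 * nmat q.2.1 * q.2.2 := by fun_prop
  have hfm : Measurable fun q : G × ℝ × G => f (q.1 * nmat q.2.1 * q.2.2) := hf.comp hm
  rw [nuKNK, lintegral_map hf hm, lintegral_prod _ hfm.aemeasurable]
  have h1 : ∀ k : G, ∫⁻ y : ℝ × G, f (k * nmat y.1 * y.2) ∂(etaMeasure.prod mK) =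
      ∫⁻ t, ∫⁻ k', f (k * nmat t * k') ∂mK ∂etaMeasure := by
    intro k
    rw [lintegral_prod _ (by fun_prop)]
  simp only [h1]
  rw [lintegral_lintegral_swap]
  · rfl
  · have : Measurable fun p : G × ℝ => ∫⁻ k', f (p.1 * nmat p.2 * k') ∂mK := by
      have h4 : Measurable fun q : (G × ℝ) × G => f (q.1.1 * nmat q.1.2 * q.2) := by fun_prop
      exact h4.lintegral_prod_right'
    exact this.aemeasurable

lemma lintegral_mC_fb (f : G → ℝ≥0∞) (hf : Measurable f) :
    ∫⁻ g, fb f g ∂mC = ∫⁻ g, f g ∂mC := by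
  unfold fb
  rw [lintegral_lintegral_swap (by exact (measurable_fb_aux f hf).aemeasurable)]
  have h1 : ∀ k : G, ∫⁻ g, ∫⁻ k', f (k * g * k') ∂mK ∂mC = ∫⁻ g, f g ∂mC := by
    intro k
    rw [lintegral_lintegral_swap (by
      have : Measurable fun p : G × G => f (k * p.1 * p.2) := by fun_prop
      exact this.aemeasurable)]
    have h2 : ∀ k' : G, ∫⁻ g, f (k * g * k') ∂mC = ∫⁻ g, f g ∂mC := by
      intro k'
      conv_rhs => rw [← mC_right k', lintegral_map hf (measurable_mul_const _), ← mC_left k,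
        lintegral_map (by fun_prop) (measurable_const_mul _)]
    simp [h2]
  simp [h1]

lemma exists_mC_eq : ∃ C : ℝ≥0∞, C ≠ 0 ∧ C ≠ ∞ ∧ mC = C • nuKNK := by
  obtain ⟨C, h0, ht, hC⟩ := radial
  refine ⟨C, h0, ht, ?_⟩
  refine Measure.ext_of_lintegral _ fun f hf => ?_
  rw [lintegral_smul_measure, smul_eq_mul, lintegral_nu f hf, ← lintegral_mC_fb f hf]
  have hn := continuous_nmat.measurable
  have hfb := measurable_fb f hf
  have h1 : ∀ g, fb f g = (fun s => fb f (nmat √(2 * (s - 1)))) (Fr g) := by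
    intro g
    apply fb_congr f hf
    rw [Fr_nmat, Real.sq_sqrt (by linarith [one_le_Fr g])]; ring
  rw [lintegral_congr h1, hC (fun s => fb f (nmat √(2 * (s - 1)))) (by fun_prop)]
  congr 1
  refine lintegral_congr fun t => ?_
  apply fb_congr f hf
  rw [Fr_nmat, Fr_nmat, Real.sq_sqrt (by nlinarith [sq_nonneg t])]; ring

lemma nu_eq : ∃ C : ℝ≥0∞, nuKNK = C • mC := by
  obtain ⟨C, h0, ht, hC⟩ := exists_mC_eq
  refine ⟨C⁻¹, ?_⟩
  rw [hC, smul_smul, ENNReal.inv_mul_cancel h0 ht, one_smul]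

lemma nu_Fr (s : ℝ) (hs : 1 ≤ s) : nuKNK {g | Fr g ≤ s} = ENNReal.ofReal (2 * (s - 1)) := by
  have hS : MeasurableSet {g | Fr g ≤ s} := measurableSet_le continuous_Fr.measurable measurable_const
  have h1 : ∀ t, fb ({g | Fr g ≤ s}.indicator 1) (nmat t) =
      (Set.Icc (-√(2 * (s - 1))) √(2 * (s - 1))).indicator 1 t := by
    intro t
    have hk : ∀ x y : ℝ, ({g | Fr g ≤ s}.indicator 1 (kmat x * nmat t * kmat y) : ℝ≥0∞) =
        (Set.Icc (-√(2 * (s - 1))) √(2 * (s - 1))).indicator 1 t := by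
      intro x y
      have : (kmat x * nmat t * kmat y) ∈ {g | Fr g ≤ s} ↔
          t ∈ Set.Icc (-√(2 * (s - 1))) √(2 * (s - 1)) := by
        change Fr _ ≤ s ↔ _
        rw [Fr_kgk, Fr_nmat, Set.mem_Icc, ← abs_le, ← Real.sqrt_sq_eq_abs,
          Real.sqrt_le_sqrt_iff (by linarith)]
        constructor <;> intro h <;> linarith
      by_cases h : t ∈ Set.Icc (-√(2 * (s - 1))) √(2 * (s - 1))
      · rw [Set.indicator_of_mem h, Set.indicator_of_mem (this.2 h)]; rfl
      · rw [Set.indicator_of_notMem h, Set.indicator_of_notMem (fun h' => h (this.1 h'))]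
    have hi : Measurable ({g | Fr g ≤ s}.indicator (1 : G → ℝ≥0∞)) := measurable_one.indicator hS
    unfold fb
    have hmk : ∀ᵐ k ∂mK, ∃ x, k = kmat x := by
      have : MeasurableSet {k : G | ∃ x, k = kmat x} := by
        have hr : {k : G | ∃ x, k = kmat x} = kmat '' Set.Icc 0 (2 * Real.pi) := by
          ext k
          constructor
          · rintro ⟨x, rfl⟩
            obtain ⟨y, hy, hxy⟩ := kmat_two_pi.exists_mem_Ico₀ (by positivity) x
            exact ⟨y, ⟨hy.1, hy.2.le⟩, hxy.symm⟩
          · rintro ⟨x, _, rfl⟩; exact ⟨x, rfl⟩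
        rw [hr]
        have : T2Space (Matrix (Fin 2) (Fin 2) ℝ) := inferInstance
        have : T2Space G := inferInstanceAs (T2Space {A : Matrix (Fin 2) (Fin 2) ℝ // A.det = 1})
        exact (isCompact_Icc.image continuous_kmat).measurableSet
      rw [mK]
      rw [ae_map_iff continuous_kmat.measurable.aemeasurable (by exact this)]
      exact Filter.Eventually.of_forall fun x => ⟨x, rfl⟩
    have h2 : ∀ᵐ k ∂mK, ∫⁻ k', ({g | Fr g ≤ s}.indicator 1 (k * nmat t * k') : ℝ≥0∞) ∂mK =
        (Set.Icc (-√(2 * (s - 1))) √(2 * (s - 1))).indicator 1 t := by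
      filter_upwards [hmk] with k hk1
      obtain ⟨x, rfl⟩ := hk1
      have : ∀ᵐ k' ∂mK, ({g | Fr g ≤ s}.indicator 1 (kmat x * nmat t * k') : ℝ≥0∞) =
        (Set.Icc (-√(2 * (s - 1))) √(2 * (s - 1))).indicator 1 t := by
        filter_upwards [hmk] with k' hk1'
        obtain ⟨y, rfl⟩ := hk1'
        exact hk x y
      rw [lintegral_congr_ae this]
      simp
    rw [lintegral_congr_ae h2]
    simp
  rw [← lintegral_indicator_one hS, lintegral_nu _ (measurable_one.indicator hS),
    lintegral_congr h1, eta_even _ (measurable_one.indicator measurableSet_Icc)]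
  · have hR : 0 ≤ √(2 * (s - 1)) := Real.sqrt_nonneg _
    have hR2 : √(2 * (s - 1)) ^ 2 = 2 * (s - 1) := Real.sq_sqrt (by linarith)
    generalize √(2 * (s - 1)) = R at *
    have h3 : ∫⁻ t in Set.Ioi (0:ℝ), ENNReal.ofReal t * (Set.Icc (-R) R).indicator 1 t =
        ∫⁻ t in Set.Ioc 0 R, ENNReal.ofReal t := by
      rw [← lintegral_indicator measurableSet_Ioi, ← lintegral_indicator measurableSet_Ioc]
      congr 1
      ext t
      by_cases ht : 0 < t
      · have : -R ≤ t := by linarith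
        simp [Set.indicator, ht, this]
      · simp [Set.indicator, ht]
    rw [h3, ← ofReal_integral_eq_lintegral_ofReal]
    · rw [← intervalIntegral.integral_of_le hR, integral_id, ← hR2,
        show R ^ 2 = 2 * ((R ^ 2 - 0 ^ 2) / 2) by ring, ENNReal.ofReal_mul (by norm_num)]
      simp
    · exact (Continuous.integrableOn_Icc (by fun_prop)).mono_set Set.Ioc_subset_Icc_self
    · filter_upwards [ae_restrict_mem measurableSet_Ioc] with D hD
      exact hD.1.le
  · intro t
    simp only [Set.indicator, Set.mem_Icc]
    congr 1
    apply propext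
    constructor <;> rintro ⟨h, h'⟩ <;> constructor <;> linarith

lemma nu_left : Measure.IsMulLeftInvariant nuKNK := by
  obtain ⟨C, hC⟩ := nu_eq
  constructor
  intro g
  rw [hC, Measure.map_smul, mC_left]

lemma nu_right : Measure.IsMulRightInvariant nuKNK := by
  obtain ⟨C, hC⟩ := nu_eq
  constructor
  intro g
  rw [hC, Measure.map_smul, mC_right]

lemma nu_haar : Measure.IsHaarMeasure nuKNK := by
  have hl := nu_left
  have hfin : IsFiniteMeasureOnCompacts nuKNK := by
    constructor
    intro K hK
    obtain ⟨M, hM⟩ := (hK.image continuous_Fr).bddAbove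
    refine lt_of_le_of_lt (measure_mono (t := {g | Fr g ≤ max M 1}) fun g hg => ?_) ?_
    · exact le_trans (hM ⟨g, hg, rfl⟩) (le_max_left _ _)
    · rw [nu_Fr _ (le_max_right _ _)]; exact ENNReal.ofReal_lt_top
  have hop : Measure.IsOpenPosMeasure nuKNK := by
    constructor
    rintro U hU ⟨g, hg⟩ h0
    have huniv : nuKNK Set.univ = 0 := by
      refine measure_null_of_locally_null _ fun x _ => ?_
      refine ⟨(fun y => g * x⁻¹ * y) ⁻¹' U, ?_, ?_⟩
      · rw [nhdsWithin_univ]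
        refine (hU.preimage (continuous_const_mul _)).mem_nhds ?_
        simpa using hg
      · rw [measure_preimage_mul]; exact h0
    have h2 := measure_mono_null (Set.subset_univ {g | Fr g ≤ 2}) huniv
    rw [nu_Fr 2 (by norm_num)] at h2
    norm_num at h2
  exact { toIsFiniteMeasureOnCompacts := hfin, toIsMulLeftInvariant := hl, toIsOpenPosMeasure := hop }


/-- **`KNK` decomposition of Haar measure on `SL(2,ℝ)`.**  The pushforward of
`m_K × η × m_K` under `(k, t, k') ↦ k n_t k'` is a (left- and right-invariant) Haar
measure on `SL(2,ℝ)`, and it gives each hyperbolic ball `B_r` `(r > 0)` the measure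
`2 (cosh r − 1)`. -/
theorem nuKNK_isHaarMeasure_and_ball_volume :
    Measure.IsHaarMeasure nuKNK ∧ Measure.IsMulRightInvariant nuKNK ∧
      ∀ r : ℝ, 0 < r → nuKNK (hypBall r) = ENNReal.ofReal (2 * (Real.cosh r - 1)) := by
  refine ⟨nu_haar, nu_right, fun r hr => ?_⟩
  rw [← nu_Fr _ (Real.one_le_cosh r)]
  congr 1
  ext g
  change dist _ _ ≤ r ↔ Fr g ≤ Real.cosh r
  rw [← cosh_dist_eq, Real.cosh_le_cosh, abs_of_nonneg dist_nonneg, abs_of_pos hr]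
end
end

section
/- Suppose θ, θ' : (0,∞) → ℝ are functions such that for every r > 0 the matrix identity k_{θ(r)} a_r k_{θ'(r)} = n_{t(r)} holds in SL(2,ℝ), where t(r) = 2 sinh(r/2). Then cos²θ(r) → 1 and cos²θ'(r) → 0 as r → ∞ (i.e. the first Cartan angular component tends to the identity rotation and the second tends to a quarter-turn, which acts on the hyperbolic plane as a 180° rotation). -/
open Filter Topology

noncomputable section

/-- The diagonal element `a_s = diag(e^{s/2}, e^{-s/2}) ∈ SL(2,ℝ)`. -/
def amat (s : ℝ) : G :=
  ⟨!![Real.exp (s / 2), 0; 0, Real.exp (-s / 2)], by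
    rw [Matrix.det_fin_two_of, ← Real.exp_add, show s / 2 + -s / 2 = (0:ℝ) by ring,
      Real.exp_zero]; ring⟩

/-- **Asymptotics of the angular components of the Cartan decomposition along a
horocycle.**  If for every `r > 0` one has `k_{θ(r)} a_r k_{θ'(r)} = n_{2 sinh(r/2)}`
in `SL(2,ℝ)`, then `cos²(θ(r)) → 1` and `cos²(θ'(r)) → 0` as `r → ∞`; that is, the
first angular component tends to the identity rotation while the second tends to a
quarter-turn (a `180°` rotation of the hyperbolic plane). -/
theorem cartan_angles_tendsto (θ θ' : ℝ → ℝ)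
    (h : ∀ r : ℝ, 0 < r →
      kmat (θ r) * amat r * kmat (θ' r) = nmat (2 * Real.sinh (r / 2))) :
    Tendsto (fun r => Real.cos (θ r) ^ 2) atTop (𝓝 1) ∧
      Tendsto (fun r => Real.cos (θ' r) ^ 2) atTop (𝓝 0) := by
  have key : ∀ r : ℝ, 0 < r → Real.sin (θ r) ^ 2 ≤ Real.exp (-r) ∧
      Real.cos (θ' r) ^ 2 ≤ Real.exp (-r) := by
    intro r hr
    have h1 := congrArg (fun M : G => (M : Matrix (Fin 2) (Fin 2) ℝ)) (h r hr)
    simp only [Matrix.SpecialLinearGroup.coe_mul] at h1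
    have h00 := congrFun (congrFun h1 0) 0
    have h10 := congrFun (congrFun h1 1) 0
    simp [kmat, amat, nmat, Matrix.mul_apply, Fin.sum_univ_two] at h00 h10
    have hE : Real.exp (-r / 2) * Real.exp (r / 2) = 1 := by
      rw [← Real.exp_add, show -r / 2 + r / 2 = (0:ℝ) by ring, Real.exp_zero]
    have hr2 : Real.exp (-r) = Real.exp (-r / 2) ^ 2 := by
      rw [sq, ← Real.exp_add]; congr 1; ring
    have t1 := Real.sin_sq_add_cos_sq (θ r)
    have t2 := Real.sin_sq_add_cos_sq (θ' r)
    rw [hr2]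
    clear h1 hr2
    generalize Real.exp (-r / 2) = e at *
    generalize Real.exp (r / 2) = E at *
    generalize Real.sin (θ r) = s at *
    generalize Real.cos (θ r) = c at *
    generalize Real.sin (θ' r) = S at *
    generalize Real.cos (θ' r) = C at *
    have a1 : E * C = c := by
      linear_combination c * h00 + s * h10 - E * C * t1
    have a2 : s = -(e * S) := by
      linear_combination c * h10 - s * h00 - e * S * t1
    have a3 : C = e * c := by
      linear_combination e * a1 - C * hE
    constructor
    · rw [a2]; nlinarith [mul_nonneg (sq_nonneg e) (sq_nonneg C)]
    · rw [a3]; nlinarith [mul_nonneg (sq_nonneg e) (sq_nonneg s)]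
  have hexp : Tendsto (fun r : ℝ => Real.exp (-r)) atTop (𝓝 0) :=
    Real.tendsto_exp_neg_atTop_nhds_zero
  constructor
  · have hs : Tendsto (fun r => Real.sin (θ r) ^ 2) atTop (𝓝 0) := by
      refine squeeze_zero' (Eventually.of_forall fun r => sq_nonneg _) ?_ hexp
      filter_upwards [eventually_gt_atTop 0] with r hr using (key r hr).1
    have h2 := hs.const_sub 1
    simp only [sub_zero] at h2
    refine h2.congr fun r => ?_
    linarith [Real.sin_sq_add_cos_sq (θ r)]
  · refine squeeze_zero' (Eventually.of_forall fun r => sq_nonneg _) ?_ hexp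
    filter_upwards [eventually_gt_atTop 0] with r hr using (key r hr).2
end
end

section
/- Let (h_t)_{t∈ℝ} be a jointly measurable measure-preserving ergodic flow on a standard probability space (X,μ). Let ψ : [0,∞) → [0,∞) be a continuous function for which there exist constants C > 0, κ > κ' > 0 and C₁ ≥ 0 with |ψ(t) − C t^κ| ≤ C₁ (1 + t^{κ'}) for all t ≥ 0. Then for every f ∈ L^1(X,μ), the weighted averages A_T f(x) = (∫_0^T ψ(t) dt)^{−1} ∫_0^T f(h_{−t} x) ψ(t) dt converge to ∫_X f dμ for μ-almost every x ∈ X as T → ∞ (polynomially weighted Birkhoff pointwise ergodic theorem). -/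
open MeasureTheory Filter Topology

noncomputable section

lemma wb_abel_bound (g : ℝ → ℝ) (T κ B : ℝ) (hT : 0 ≤ T) (hκ : 0 < κ)
    (hg : IntervalIntegrable g volume 0 T)
    (hB : ∀ t ∈ Set.Icc 0 T, |∫ s in (0:ℝ)..t, g s| ≤ B) :
    |∫ t in (0:ℝ)..T, g t * t ^ κ| ≤ 2 * B * T ^ κ := by
  have hpI : ∀ t : ℝ, IntervalIntegrable (fun s : ℝ => κ * s ^ (κ - 1)) volume 0 t := fun t =>
    (intervalIntegral.intervalIntegrable_rpow' (by linarith)).const_mul κ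
  have hP : ∀ t : ℝ, (∫ s in (0:ℝ)..t, κ * s ^ (κ - 1)) = t ^ κ := by
    intro t
    rw [intervalIntegral.integral_const_mul, integral_rpow (Or.inl (by linarith))]
    rw [sub_add_cancel, Real.zero_rpow hκ.ne']
    field_simp
    ring
  have hac1 := (hpI T).absolutelyContinuousOnInterval_intervalIntegral (c := 0) (by simp)
  have hac2 := hg.absolutelyContinuousOnInterval_intervalIntegral (c := 0) (by simp)
  have key := hac1.integral_mul_deriv_eq_deriv_mul hac2
  have e1 : ∫ x in (0:ℝ)..T, (∫ s in (0:ℝ)..x, κ * s ^ (κ - 1)) *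
      deriv (fun x => ∫ s in (0:ℝ)..x, g s) x = ∫ t in (0:ℝ)..T, g t * t ^ κ := by
    apply intervalIntegral.integral_congr_ae
    filter_upwards [hg.ae_hasDerivAt_integral] with x hx hx'
    rw [(hx (Set.uIoc_subset_uIcc hx') 0 (by simp)).deriv, hP, mul_comm]
  have e2 : ∫ x in (0:ℝ)..T, deriv (fun x => ∫ s in (0:ℝ)..x, κ * s ^ (κ - 1)) x *
      (∫ s in (0:ℝ)..x, g s) = ∫ x in (0:ℝ)..T, (κ * x ^ (κ - 1)) * (∫ s in (0:ℝ)..x, g s) := by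
    apply intervalIntegral.integral_congr_ae
    filter_upwards [(hpI T).ae_hasDerivAt_integral] with x hx hx'
    rw [(hx (Set.uIoc_subset_uIcc hx') 0 (by simp)).deriv]
  rw [e1, e2, hP] at key
  simp only [intervalIntegral.integral_same, zero_mul, sub_zero] at key
  have hb2 : |∫ x in (0:ℝ)..T, (κ * x ^ (κ - 1)) * (∫ s in (0:ℝ)..x, g s)| ≤ T ^ κ * B := by
    rw [← Real.norm_eq_abs, ← hP T, ← intervalIntegral.integral_mul_const]
    apply intervalIntegral.norm_integral_le_of_norm_le hT
    · refine Eventually.of_forall fun x hx => ?_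
      rw [norm_mul, Real.norm_eq_abs, Real.norm_eq_abs,
        abs_of_nonneg (mul_nonneg hκ.le (Real.rpow_nonneg hx.1.le _))]
      exact mul_le_mul_of_nonneg_left (hB x ⟨hx.1.le, hx.2⟩)
        (mul_nonneg hκ.le (Real.rpow_nonneg hx.1.le _))
    · exact (hpI T).mul_const B
  have hb1 : |T ^ κ * ∫ s in (0:ℝ)..T, g s| ≤ T ^ κ * B := by
    rw [abs_mul, abs_of_nonneg (Real.rpow_nonneg hT _)]
    exact mul_le_mul_of_nonneg_left (hB T ⟨hT, le_rfl⟩) (Real.rpow_nonneg hT _)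
  rw [key]
  have := abs_sub (T ^ κ * ∫ s in (0:ℝ)..T, g s)
    (∫ x in (0:ℝ)..T, (κ * x ^ (κ - 1)) * (∫ s in (0:ℝ)..x, g s))
  linarith

lemma wb_zero (g : ℝ → ℝ) (κ : ℝ) (hκ : 0 < κ)
    (hg : ∀ T, IntervalIntegrable g volume 0 T)
    (hG : Tendsto (fun T : ℝ => T⁻¹ * ∫ t in (0:ℝ)..T, g t) atTop (𝓝 0)) :
    Tendsto (fun T : ℝ => (T ^ (κ + 1))⁻¹ * ∫ t in (0:ℝ)..T, g t * t ^ κ) atTop (𝓝 0) := by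
  rw [Metric.tendsto_atTop]
  intro ε hε
  obtain ⟨N, hN⟩ := (Metric.tendsto_atTop.1 hG) (ε / 4) (by linarith)
  set N' := max N 1
  have hcont : Continuous fun t : ℝ => ∫ s in (0:ℝ)..t, g s :=
    intervalIntegral.continuous_primitive (fun a b => (hg a).symm.trans (hg b)) 0
  obtain ⟨K, hK⟩ := (isCompact_Icc (a := (0:ℝ)) (b := N')).exists_bound_of_continuousOn
    hcont.continuousOn
  have hN'1 : 1 ≤ N' := le_max_right _ _
  have hK0 : 0 ≤ K := le_trans (norm_nonneg _) (hK 0 ⟨le_rfl, by linarith⟩)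
  have hB : ∀ t : ℝ, 0 ≤ t → |∫ s in (0:ℝ)..t, g s| ≤ ε / 4 * t + K := by
    intro t ht
    rcases le_total t N' with h | h
    · have := hK t ⟨ht, h⟩
      rw [Real.norm_eq_abs] at this
      nlinarith
    · have := hN t (le_trans (le_max_left _ _) h)
      rw [Real.dist_eq, sub_zero, abs_mul, abs_of_nonneg (inv_nonneg.2 ht),
        inv_mul_lt_iff₀ (by linarith)] at this
      linarith
  refine ⟨max N' (8 * K / ε + 1), fun T hT => ?_⟩
  have hT1 : 1 ≤ T := hN'1.trans ((le_max_left _ _).trans hT)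
  have hT2 : 8 * K / ε < T := by
    have := (le_max_right _ _).trans hT
    linarith
  have hT0 : 0 < T := by linarith
  rw [div_lt_iff₀ hε] at hT2
  have := wb_abel_bound g T κ (ε / 4 * T + K) hT0.le hκ (hg T) (fun t ht => by
    refine (hB t ht.1).trans ?_
    have := ht.2
    nlinarith)
  rw [Real.dist_eq, sub_zero, abs_mul, abs_of_nonneg (by positivity),
    inv_mul_lt_iff₀ (by positivity)]
  refine this.trans_lt ?_
  rw [Real.rpow_add hT0, Real.rpow_one]
  have hp : 0 < T ^ κ := by positivity
  have : 2 * (ε / 4 * T + K) < T * ε := by nlinarith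
  nlinarith

lemma wb_tpow (g : ℝ → ℝ) (κ m : ℝ) (hκ : 0 < κ)
    (hg : ∀ T, IntervalIntegrable g volume 0 T)
    (hG : Tendsto (fun T : ℝ => T⁻¹ * ∫ t in (0:ℝ)..T, g t) atTop (𝓝 m)) :
    Tendsto (fun T : ℝ => (T ^ (κ + 1))⁻¹ * ∫ t in (0:ℝ)..T, g t * t ^ κ) atTop
      (𝓝 (m / (κ + 1))) := by
  have h0 := wb_zero (fun t => g t - m) κ hκ (fun T => (hg T).sub intervalIntegrable_const) (by
    have : Tendsto (fun T : ℝ => T⁻¹ * (∫ t in (0:ℝ)..T, g t) - m) atTop (𝓝 0) := by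
      simpa using hG.sub_const m
    refine this.congr' ?_
    filter_upwards [eventually_gt_atTop 0] with T hT
    rw [intervalIntegral.integral_sub (hg T) intervalIntegrable_const]
    simp
    field_simp)
  have h1 := h0.add_const (m / (κ + 1))
  rw [zero_add] at h1
  refine h1.congr' ?_
  filter_upwards [eventually_gt_atTop 0] with T hT
  have hc : Continuous fun t : ℝ => t ^ κ := Real.continuous_rpow_const hκ.le
  have : ∫ t in (0:ℝ)..T, (g t - m) * t ^ κ =
      (∫ t in (0:ℝ)..T, g t * t ^ κ) - m * (T ^ (κ + 1) / (κ + 1)) := by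
    simp_rw [sub_mul]
    rw [intervalIntegral.integral_sub ((hg T).mul_continuousOn hc.continuousOn)
      ((hc.intervalIntegrable _ _).const_mul m), intervalIntegral.integral_const_mul,
      integral_rpow (Or.inl (by linarith)), Real.zero_rpow (by linarith), sub_zero]
  rw [this]
  have hp : 0 < T ^ (κ + 1) := by positivity
  field_simp
  ring

lemma wb_psi (g : ℝ → ℝ) (m m' : ℝ)
    (hg : ∀ T, IntervalIntegrable g volume 0 T)
    (hG : Tendsto (fun T : ℝ => T⁻¹ * ∫ t in (0:ℝ)..T, g t) atTop (𝓝 m))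
    (hG' : Tendsto (fun T : ℝ => T⁻¹ * ∫ t in (0:ℝ)..T, |g t|) atTop (𝓝 m'))
    (ψ : ℝ → ℝ)
    (hψ_cont : ContinuousOn ψ (Set.Ici 0))
    (C κ κ' C₁ : ℝ) (hκ'pos : 0 < κ') (hκ : κ' < κ) (hC₁ : 0 ≤ C₁)
    (hbound : ∀ t : ℝ, 0 ≤ t → |ψ t - C * t ^ κ| ≤ C₁ * (1 + t ^ κ')) :
    Tendsto (fun T : ℝ => (T ^ (κ + 1))⁻¹ * ∫ t in (0:ℝ)..T, g t * ψ t) atTop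
      (𝓝 (C * m / (κ + 1))) := by
  have h1 := (wb_tpow g κ m (by linarith) hg hG).const_mul C
  have hc : Continuous fun t : ℝ => t ^ κ := Real.continuous_rpow_const (by linarith)
  have herr : Tendsto (fun T : ℝ => (T ^ (κ + 1))⁻¹ *
      ∫ t in (0:ℝ)..T, g t * (ψ t - C * t ^ κ)) atTop (𝓝 0) := by
    have hlim : Tendsto (fun T : ℝ => C₁ * (T ^ (-κ) + T ^ (-(κ - κ'))) *
        (T⁻¹ * ∫ t in (0:ℝ)..T, |g t|)) atTop (𝓝 0) := by
      have a := tendsto_rpow_neg_atTop (y := κ) (by linarith)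
      have b := tendsto_rpow_neg_atTop (y := κ - κ') (by linarith)
      simpa using ((a.add b).const_mul C₁).mul hG'
    refine squeeze_zero_norm' ?_ hlim
    filter_upwards [eventually_gt_atTop 0] with T hT
    have hb : ‖∫ t in (0:ℝ)..T, g t * (ψ t - C * t ^ κ)‖ ≤
        ∫ t in (0:ℝ)..T, |g t| * (C₁ * (1 + T ^ κ')) := by
      apply intervalIntegral.norm_integral_le_of_norm_le hT.le
      · refine Eventually.of_forall fun t ht => ?_
        rw [norm_mul, Real.norm_eq_abs, Real.norm_eq_abs]
        refine mul_le_mul_of_nonneg_left ((hbound t ht.1.le).trans ?_) (abs_nonneg _)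
        have := Real.rpow_le_rpow ht.1.le ht.2 hκ'pos.le
        gcongr
      · exact (hg T).abs.mul_const _
    rw [intervalIntegral.integral_mul_const] at hb
    rw [norm_mul, Real.norm_eq_abs, abs_of_nonneg (by positivity)]
    have e : (T ^ (κ + 1))⁻¹ * (1 + T ^ κ') = (T ^ (-κ) + T ^ (-(κ - κ'))) * T⁻¹ := by
      rw [← Real.rpow_neg hT.le, ← Real.rpow_neg_one T, add_mul, mul_add, mul_one,
        ← Real.rpow_add hT, ← Real.rpow_add hT, ← Real.rpow_add hT]
      ring_nf
    calc _ ≤ (T ^ (κ + 1))⁻¹ * ((∫ t in (0:ℝ)..T, |g t|) * (C₁ * (1 + T ^ κ'))) := by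
          gcongr
      _ = ((T ^ (κ + 1))⁻¹ * (1 + T ^ κ')) * (C₁ * ∫ t in (0:ℝ)..T, |g t|) := by ring
      _ = _ := by rw [e]; ring
  have h2 := h1.add herr
  rw [add_zero, ← mul_div_assoc] at h2
  refine h2.congr' ?_
  filter_upwards [eventually_gt_atTop 0] with T hT
  have i1 : IntervalIntegrable (fun t => g t * ψ t) volume 0 T :=
    (hg T).mul_continuousOn (hψ_cont.mono (by
      rw [Set.uIcc_of_le hT.le]; exact fun x hx => hx.1))
  have i2 : IntervalIntegrable (fun t => g t * (C * t ^ κ)) volume 0 T :=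
    (hg T).mul_continuousOn (continuous_const.mul hc).continuousOn
  simp_rw [mul_sub]
  rw [intervalIntegral.integral_sub i1 i2]
  have : ∫ t in (0:ℝ)..T, g t * (C * t ^ κ) = C * ∫ t in (0:ℝ)..T, g t * t ^ κ := by
    rw [← intervalIntegral.integral_const_mul]
    congr 1; ext t; ring
  rw [this]; ring

lemma wb_final (g : ℝ → ℝ) (m m' : ℝ)
    (hg : ∀ T, IntervalIntegrable g volume 0 T)
    (hG : Tendsto (fun T : ℝ => T⁻¹ * ∫ t in (0:ℝ)..T, g t) atTop (𝓝 m))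
    (hG' : Tendsto (fun T : ℝ => T⁻¹ * ∫ t in (0:ℝ)..T, |g t|) atTop (𝓝 m'))
    (ψ : ℝ → ℝ)
    (hψ_cont : ContinuousOn ψ (Set.Ici 0))
    (C κ κ' C₁ : ℝ) (hC : 0 < C) (hκ'pos : 0 < κ') (hκ : κ' < κ) (hC₁ : 0 ≤ C₁)
    (hbound : ∀ t : ℝ, 0 ≤ t → |ψ t - C * t ^ κ| ≤ C₁ * (1 + t ^ κ')) :
    Tendsto (fun T : ℝ => (∫ t in (0:ℝ)..T, ψ t)⁻¹ * ∫ t in (0:ℝ)..T, g t * ψ t)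
      atTop (𝓝 m) := by
  have h1 := wb_psi g m m' hg hG hG' ψ hψ_cont C κ κ' C₁ hκ'pos hκ hC₁ hbound
  have hone : Tendsto (fun T : ℝ => T⁻¹ * ∫ t in (0:ℝ)..T, (1:ℝ)) atTop (𝓝 1) := by
    refine tendsto_const_nhds.congr' ?_
    filter_upwards [eventually_gt_atTop 0] with T hT
    simp
    field_simp
  have h2 := wb_psi (fun _ => 1) 1 1 (fun T => intervalIntegrable_const) hone
    (by simpa using hone) ψ hψ_cont C κ κ' C₁ hκ'pos hκ hC₁ hbound
  have hκ1 : 0 < κ + 1 := by linarith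
  have h3 := h1.div h2 (by positivity)
  have e : C * m / (κ + 1) / (C * 1 / (κ + 1)) = m := by field_simp
  rw [e] at h3
  refine h3.congr' ?_
  filter_upwards [eventually_gt_atTop 0] with T hT
  have hp : (T ^ (κ + 1))⁻¹ ≠ 0 := by positivity
  simp only [one_mul, Pi.div_apply]
  rw [mul_div_mul_left _ _ hp, div_eq_inv_mul]

structure WbFlow {X : Type} [MeasurableSpace X] (μ : Measure X) (φ : ℝ → X → X) : Prop where
  zero : ∀ x, φ 0 x = x
  add : ∀ s t x, φ (s + t) x = φ s (φ t x)
  meas : Measurable fun q : ℝ × X => φ q.1 q.2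
  mp : ∀ t : ℝ, MeasurePreserving (φ t) μ μ
  erg : ∀ s : Set X, MeasurableSet s → (∀ t : ℝ, φ t ⁻¹' s = s) → μ s = 0 ∨ μ s = 1

section flow

set_option linter.unusedSectionVars false

variable {X : Type} [MeasurableSpace X] {μ : Measure X} {φ : ℝ → X → X} {f : X → ℝ}

/-- local integrability along the orbit of `x` -/
def WbL (φ : ℝ → X → X) (f : X → ℝ) (x : X) : Prop :=
  ∀ a b : ℝ, IntervalIntegrable (fun t => f (φ t x)) volume a b

def WbG (φ : ℝ → X → X) (f : X → ℝ) (x : X) (T : ℝ) : ℝ := ∫ t in (0:ℝ)..T, f (φ t x)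

def WbH (φ : ℝ → X → X) (f : X → ℝ) (x : X) (T : ℝ) : ℝ := ∫ t in (0:ℝ)..T, |f (φ t x)|

def WbM (φ : ℝ → X → X) (f : X → ℝ) (n : ℕ) (x : X) : ℝ :=
  ⨆ q : ℚ, WbG φ f x (max 0 (min (q : ℝ) n))

lemma WbL.shift (hφ : WbFlow μ φ) {x : X} (hx : WbL φ f x) (s : ℝ) : WbL φ f (φ s x) := by
  intro a b
  have := (hx (a + s) (b + s)).comp_add_right s
  simpa [hφ.add] using this

lemma WbG_shift (hφ : WbFlow μ φ) {x : X} (hx : WbL φ f x) (s T : ℝ) :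
    WbG φ f (φ s x) T = WbG φ f x (T + s) - WbG φ f x s := by
  unfold WbG
  rw [intervalIntegral.integral_interval_sub_left (hx _ _) (hx _ _)]
  simp_rw [← hφ.add]
  rw [intervalIntegral.integral_comp_add_right (fun t => f (φ t x)) s, zero_add]

lemma WbG_cont {x : X} (hx : WbL φ f x) : Continuous (WbG φ f x) :=
  intervalIntegral.continuous_primitive hx 0

lemma WbG_zero (x : X) : WbG φ f x 0 = 0 := by simp [WbG]

lemma WbG_abs_le {x : X} (hx : WbL φ f x) {T S : ℝ} (hT : 0 ≤ T) (hTS : T ≤ S) :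
    |WbG φ f x T| ≤ WbH φ f x S := by
  refine (intervalIntegral.abs_integral_le_integral_abs hT).trans ?_
  refine intervalIntegral.integral_mono_interval le_rfl hT hTS ?_ (hx 0 S).abs
  exact Eventually.of_forall fun t => abs_nonneg _

lemma WbM_bdd {x : X} (hx : WbL φ f x) (n : ℕ) :
    BddAbove (Set.range fun q : ℚ => WbG φ f x (max 0 (min (q : ℝ) n))) := by
  refine ⟨WbH φ f x n, ?_⟩
  rintro _ ⟨q, rfl⟩
  exact (le_abs_self _).trans (WbG_abs_le hx (le_max_left _ _)
    (max_le (Nat.cast_nonneg n) (min_le_right _ _)))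

lemma WbM_le {x : X} {n : ℕ} {b : ℝ} (hb : ∀ T : ℝ, 0 ≤ T → T ≤ n → WbG φ f x T ≤ b) :
    WbM φ f n x ≤ b :=
  ciSup_le fun _ => hb _ (le_max_left _ _) (max_le (Nat.cast_nonneg n) (min_le_right _ _))

lemma le_WbM {x : X} (hx : WbL φ f x) {n : ℕ} {T : ℝ} (h0 : 0 ≤ T) (hT : T ≤ n) :
    WbG φ f x T ≤ WbM φ f n x := by
  have key : ∀ r : ℝ, WbG φ f x (max 0 (min r n)) ≤ WbM φ f n x := by
    intro r
    refine (Rat.denseRange_cast (𝕜 := ℝ)).induction_on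
      (p := fun r => WbG φ f x (max 0 (min r n)) ≤ WbM φ f n x) r ?_ ?_
    · refine isClosed_le ((WbG_cont hx).comp ?_) continuous_const
      fun_prop
    · intro q
      exact le_ciSup (WbM_bdd hx n) q
  have := key T
  rwa [min_eq_left hT, max_eq_right h0] at this

lemma WbM_nonneg {x : X} (hx : WbL φ f x) (n : ℕ) : 0 ≤ WbM φ f n x := by
  have := le_WbM hx (n := n) le_rfl (Nat.cast_nonneg n)
  rwa [WbG_zero] at this

lemma WbM_le_H {x : X} (hx : WbL φ f x) (n : ℕ) : WbM φ f n x ≤ WbH φ f x n :=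
  WbM_le fun _ h0 hT => (le_abs_self _).trans (WbG_abs_le hx h0 hT)

lemma WbM_mono {x : X} (hx : WbL φ f x) {n m : ℕ} (h : n ≤ m) : WbM φ f n x ≤ WbM φ f m x :=
  WbM_le fun _ h0 hT => le_WbM hx h0 (hT.trans (by exact_mod_cast h))

lemma WbD_lower (hφ : WbFlow μ φ) {x : X} (hx : WbL φ f x) (n : ℕ) :
    WbG φ f x 1 ≤ WbM φ f (n + 1) x - WbM φ f n (φ 1 x) := by
  have : WbM φ f n (φ 1 x) ≤ WbM φ f (n + 1) x - WbG φ f x 1 := by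
    refine WbM_le fun T h0 hT => ?_
    rw [WbG_shift hφ hx]
    have := le_WbM hx (n := n + 1) (T := T + 1) (by linarith) (by push_cast; linarith)
    linarith
  linarith

lemma WbD_upper (hφ : WbFlow μ φ) {x : X} (hx : WbL φ f x) (n : ℕ) {c : ℝ}
    (hc1 : WbG φ f x 1 ≤ c) (hc2 : WbH φ f x 1 ≤ c + WbM φ f n (φ 1 x)) :
    WbM φ f (n + 1) x - WbM φ f n (φ 1 x) ≤ c := by
  have : WbM φ f (n + 1) x ≤ c + WbM φ f n (φ 1 x) := by
    refine WbM_le fun T h0 hT => ?_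
    rcases le_total T 1 with h1 | h1
    · exact ((le_abs_self _).trans (WbG_abs_le hx h0 h1)).trans hc2
    · have h2 := le_WbM (hx.shift hφ 1) (n := n) (T := T - 1) (by linarith)
        (by push_cast at hT; linarith)
      rw [WbG_shift hφ hx, sub_add_cancel] at h2
      linarith
  linarith

/-- the set where the primitive is unbounded above -/
def WbA (φ : ℝ → X → X) (f : X → ℝ) : Set X :=
  {x | WbL φ f x ∧ ∀ k : ℕ, ∃ n : ℕ, (k : ℝ) < WbM φ f n x}

lemma mem_WbA {x : X} : x ∈ WbA φ f ↔ WbL φ f x ∧ ∀ b : ℝ, ∃ T, 0 ≤ T ∧ b < WbG φ f x T := by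
  refine and_congr_right fun hx => ⟨fun H b => ?_, fun H k => ?_⟩
  · obtain ⟨k, hk⟩ := exists_nat_gt b
    obtain ⟨n, hn⟩ := H k
    by_contra! hcon
    have := WbM_le (φ := φ) (f := f) (n := n) (x := x) (b := b) fun T h0 _ => hcon T h0
    linarith
  · obtain ⟨T, h0, hT⟩ := H k
    obtain ⟨n, hn⟩ := exists_nat_ge T
    exact ⟨n, hT.trans_le (le_WbM hx h0 hn)⟩

lemma WbA_shift (hφ : WbFlow μ φ) {x : X} (hx : x ∈ WbA φ f) (s : ℝ) : φ s x ∈ WbA φ f := by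
  rw [mem_WbA] at hx ⊢
  obtain ⟨hL, hu⟩ := hx
  refine ⟨hL.shift hφ s, fun b => ?_⟩
  obtain ⟨T, h0, hT⟩ := hu (max (WbH φ f x |s|) (b + WbG φ f x s))
  have hT1 := (le_max_left _ _).trans_lt hT
  have hT2 := (le_max_right _ _).trans_lt hT
  have hs : |s| < T := by
    by_contra! hcon
    have := (le_abs_self _).trans (WbG_abs_le hL h0 hcon)
    linarith
  refine ⟨T - s, by linarith [le_abs_self s], ?_⟩
  rw [WbG_shift hφ hL, sub_add_cancel]
  linarith

lemma WbA_invariant (hφ : WbFlow μ φ) (s : ℝ) : φ s ⁻¹' WbA φ f = WbA φ f := by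
  ext x
  refine ⟨fun hx => ?_, fun hx => WbA_shift hφ hx s⟩
  have := WbA_shift hφ hx (-s)
  rwa [← hφ.add, neg_add_cancel, hφ.zero] at this

lemma Wb_meas (hφ : WbFlow μ φ) (hf : Measurable f) :
    Measurable fun q : ℝ × X => f (φ q.1 q.2) := hf.comp hφ.meas

lemma WbL_iff (hφ : WbFlow μ φ) (hf : Measurable f) (x : X) :
    WbL φ f x ↔ ∀ n : ℕ, ∫⁻ t in Set.Ioc (-(n:ℝ)) n, ‖f (φ t x)‖ₑ < ⊤ := by
  have hm : Measurable fun t => f (φ t x) :=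
    (Wb_meas hφ hf).comp (measurable_id.prodMk measurable_const)
  constructor
  · intro hx n
    have hn : -(n:ℝ) ≤ n := by linarith [Nat.cast_nonneg (α := ℝ) n]
    exact ((intervalIntegrable_iff_integrableOn_Ioc_of_le hn).1 (hx (-n) n)).2
  · intro H a b
    obtain ⟨n, hn⟩ := exists_nat_ge (max |a| |b|)
    have ha := abs_le.1 ((le_max_left _ _).trans hn)
    have hb := abs_le.1 ((le_max_right _ _).trans hn)
    have hn : -(n:ℝ) ≤ n := by linarith [Nat.cast_nonneg (α := ℝ) n]
    have : IntervalIntegrable (fun t => f (φ t x)) volume (-n) n :=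
      (intervalIntegrable_iff_integrableOn_Ioc_of_le hn).2 ⟨hm.aestronglyMeasurable, H n⟩
    refine this.mono_set ?_
    rw [Set.uIcc_of_le hn]
    exact Set.uIcc_subset_Icc ha hb

lemma WbL_meas (hφ : WbFlow μ φ) (hf : Measurable f) : MeasurableSet {x | WbL φ f x} := by
  have : {x | WbL φ f x} =
      ⋂ n : ℕ, {x | ∫⁻ t in Set.Ioc (-(n:ℝ)) n, ‖f (φ t x)‖ₑ < ⊤} := by
    ext x
    simp [WbL_iff hφ hf]
  rw [this]
  refine MeasurableSet.iInter fun n => measurableSet_lt ?_ measurable_const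
  exact Measurable.lintegral_prod_left' (f := fun q : ℝ × X => ‖f (φ q.1 q.2)‖ₑ)
    (Wb_meas hφ hf).enorm

lemma WbG_meas (hφ : WbFlow μ φ) (hf : Measurable f) (T : ℝ) :
    Measurable fun x => WbG φ f x T := by
  unfold WbG intervalIntegral
  refine Measurable.sub ?_ ?_
  · exact ((Wb_meas hφ hf).stronglyMeasurable.integral_prod_left').measurable
  · exact ((Wb_meas hφ hf).stronglyMeasurable.integral_prod_left').measurable

lemma WbM_meas (hφ : WbFlow μ φ) (hf : Measurable f) (n : ℕ) :
    Measurable fun x => WbM φ f n x :=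
  Measurable.iSup fun _ => WbG_meas hφ hf _

lemma WbA_meas (hφ : WbFlow μ φ) (hf : Measurable f) : MeasurableSet (WbA φ f) := by
  have : WbA φ f = {x | WbL φ f x} ∩ ⋂ k : ℕ, ⋃ n : ℕ, {x | (k : ℝ) < WbM φ f n x} := by
    ext x
    simp [WbA]
  rw [this]
  exact (WbL_meas hφ hf).inter (MeasurableSet.iInter fun k => MeasurableSet.iUnion fun n =>
    measurableSet_lt measurable_const (WbM_meas hφ hf n))

variable [IsProbabilityMeasure μ]

lemma Wb_int_prod (hφ : WbFlow μ φ) (hf : Measurable f) (hi : Integrable f μ) (a b : ℝ) :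
    Integrable (fun q : ℝ × X => f (φ q.1 q.2)) ((volume.restrict (Set.uIoc a b)).prod μ) := by
  rw [integrable_prod_iff (Wb_meas hφ hf).aestronglyMeasurable]
  refine ⟨Eventually.of_forall fun t => (hφ.mp t).integrable_comp_of_integrable hi, ?_⟩
  have : ∀ t, ∫ x, ‖f (φ t x)‖ ∂μ = ∫ x, ‖f x‖ ∂μ := by
    intro t
    have := integral_map (μ := μ) (hφ.mp t).aemeasurable
      (f := fun x => ‖f x‖) hf.norm.aestronglyMeasurable
    rw [(hφ.mp t).map_eq] at this
    exact this.symm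
  simp_rw [this]
  exact integrableOn_const (by simp [Set.uIoc])

lemma WbL_ae (hφ : WbFlow μ φ) (hf : Measurable f) (hi : Integrable f μ) :
    ∀ᵐ x ∂μ, WbL φ f x := by
  have : ∀ n : ℕ, ∀ᵐ x ∂μ, Integrable (fun t => f (φ t x))
      (volume.restrict (Set.uIoc (-(n:ℝ)) n)) :=
    fun n => (Wb_int_prod hφ hf hi (-(n:ℝ)) n).prod_left_ae
  filter_upwards [ae_all_iff.2 this] with x hx
  rw [WbL_iff hφ hf]
  intro n
  have hn : -(n:ℝ) ≤ n := by linarith [Nat.cast_nonneg (α := ℝ) n]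
  have := (hx n).2
  rwa [Set.uIoc_of_le hn] at this

lemma WbG_int (hφ : WbFlow μ φ) (hf : Measurable f) (hi : Integrable f μ) {T : ℝ} (hT : 0 ≤ T) :
    Integrable (fun x => WbG φ f x T) μ := by
  have := (Wb_int_prod hφ hf hi 0 T).integral_prod_right
  simpa only [WbG, intervalIntegral.integral_of_le hT, Set.uIoc_of_le hT] using this

lemma WbH_int (hφ : WbFlow μ φ) (hf : Measurable f) (hi : Integrable f μ) {T : ℝ} (hT : 0 ≤ T) :
    Integrable (fun x => WbH φ f x T) μ := by
  have : (fun x => WbH φ f x T) = fun x => WbG φ (fun y => |f y|) x T := rfl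
  rw [this]
  exact WbG_int hφ hf.abs hi.abs hT

lemma WbG_integral (hφ : WbFlow μ φ) (hf : Measurable f) (hi : Integrable f μ) :
    ∫ x, WbG φ f x 1 ∂μ = ∫ x, f x ∂μ := by
  unfold WbG
  rw [← intervalIntegral_integral_swap (f := fun t x => f (φ t x)) (Wb_int_prod hφ hf hi 0 1)]
  have : ∀ t, ∫ x, f (φ t x) ∂μ = ∫ x, f x ∂μ := by
    intro t
    have := integral_map (μ := μ) (hφ.mp t).aemeasurable
      (f := f) hf.aestronglyMeasurable
    rw [(hφ.mp t).map_eq] at this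
    exact this.symm
  simp_rw [this]
  simp

lemma WbM_int (hφ : WbFlow μ φ) (hf : Measurable f) (hi : Integrable f μ) (n : ℕ) :
    Integrable (WbM φ f n) μ := by
  refine (WbH_int hφ hf hi (Nat.cast_nonneg n)).mono' (WbM_meas hφ hf n).aestronglyMeasurable ?_
  filter_upwards [WbL_ae hφ hf hi] with x hx
  rw [Real.norm_eq_abs, abs_of_nonneg (WbM_nonneg hx n)]
  exact WbM_le_H hx n

lemma WbA_null (hφ : WbFlow μ φ) (hf : Measurable f) (hi : Integrable f μ)
    (hneg : ∫ x, f x ∂μ < 0) : μ (WbA φ f) = 0 := by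
  refine (hφ.erg _ (WbA_meas hφ hf) (WbA_invariant hφ)).resolve_right fun h1 => ?_
  have hae : ∀ᵐ x ∂μ, x ∈ WbA φ f := by
    rw [← prob_compl_eq_zero_iff (WbA_meas hφ hf)] at h1
    exact h1
  have hL := WbL_ae hφ hf hi
  have hlim : Tendsto (fun n : ℕ => ∫ x, (WbM φ f (n + 1) x - WbM φ f n (φ 1 x)) ∂μ) atTop
      (𝓝 (∫ x, WbG φ f x 1 ∂μ)) := by
    refine tendsto_integral_of_dominated_convergence (fun x => WbH φ f x 1) ?_
      (WbH_int hφ hf hi zero_le_one) ?_ ?_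
    · intro n
      exact ((WbM_meas hφ hf _).sub
        ((WbM_meas hφ hf n).comp (hφ.mp 1).measurable)).aestronglyMeasurable
    · intro n
      filter_upwards [hL] with x hx
      have hg := abs_le.1 (WbG_abs_le hx zero_le_one (le_refl (1:ℝ)))
      have hM := WbM_nonneg (hx.shift hφ 1) n
      rw [Real.norm_eq_abs, abs_le]
      refine ⟨hg.1.trans (WbD_lower hφ hx n), WbD_upper hφ hx n hg.2 (by linarith)⟩
    · filter_upwards [hae] with x hx
      have hx1 := WbA_shift hφ hx 1
      have hxL := hx.1
      obtain ⟨k, hk⟩ := exists_nat_gt (WbH φ f x 1 - WbG φ f x 1)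
      obtain ⟨N, hN⟩ := hx1.2 k
      refine tendsto_const_nhds.congr' ?_
      filter_upwards [eventually_ge_atTop N] with n hn
      have := WbM_mono hx1.1 hn
      refine le_antisymm (WbD_lower hφ hxL n) (WbD_upper hφ hxL n le_rfl (by linarith))
  have hnn : ∀ n : ℕ, 0 ≤ ∫ x, (WbM φ f (n + 1) x - WbM φ f n (φ 1 x)) ∂μ := by
    intro n
    have e : ∫ x, WbM φ f n (φ 1 x) ∂μ = ∫ x, WbM φ f n x ∂μ := by
      have := integral_map (μ := μ) (hφ.mp 1).aemeasurable
        (f := WbM φ f n) (WbM_meas hφ hf n).aestronglyMeasurable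
      rw [(hφ.mp 1).map_eq] at this
      exact this.symm
    have i2 : Integrable (fun x => WbM φ f n (φ 1 x)) μ :=
      (hφ.mp 1).integrable_comp_of_integrable (WbM_int hφ hf hi n)
    rw [integral_sub (WbM_int hφ hf hi _) i2, e, sub_nonneg]
    refine integral_mono_ae (WbM_int hφ hf hi _) (WbM_int hφ hf hi _) ?_
    filter_upwards [hL] with x hx
    exact WbM_mono hx (Nat.le_succ n)
  have := ge_of_tendsto' hlim hnn
  rw [WbG_integral hφ hf hi] at this
  linarith

lemma Wb_bdd (hφ : WbFlow μ φ) (hf : Measurable f) (hi : Integrable f μ)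
    (hneg : ∫ x, f x ∂μ < 0) : ∀ᵐ x ∂μ, ∃ b : ℝ, ∀ T, 0 ≤ T → WbG φ f x T ≤ b := by
  have h0 : ∀ᵐ x ∂μ, x ∉ WbA φ f := measure_eq_zero_iff_ae_notMem.1 (WbA_null hφ hf hi hneg)
  filter_upwards [h0, WbL_ae hφ hf hi] with x hx hL
  rw [mem_WbA] at hx
  push Not at hx
  exact hx hL

lemma Wb_upper (hφ : WbFlow μ φ) (hf : Measurable f) (hi : Integrable f μ) (c : ℝ)
    (hc : ∫ x, f x ∂μ < c) :
    ∀ᵐ x ∂μ, ∃ b : ℝ, ∀ T, 0 ≤ T → WbG φ f x T ≤ c * T + b := by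
  have := Wb_bdd hφ (f := fun y => f y - c) (hf.sub_const c) (hi.sub (integrable_const c)) (by
    rw [integral_sub hi (integrable_const c)]
    simpa using hc)
  filter_upwards [this, WbL_ae hφ hf hi] with x ⟨b, hb⟩ hL
  refine ⟨b, fun T hT => ?_⟩
  have h1 := hb T hT
  unfold WbG at h1
  rw [intervalIntegral.integral_sub (hL 0 T) intervalIntegrable_const] at h1
  simp only [intervalIntegral.integral_const, sub_zero, smul_eq_mul] at h1
  unfold WbG
  linarith

lemma Wb_birkhoff (hφ : WbFlow μ φ) (hf : Measurable f) (hi : Integrable f μ) :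
    ∀ᵐ x ∂μ, Tendsto (fun T : ℝ => T⁻¹ * ∫ t in (0:ℝ)..T, f (φ t x)) atTop
      (𝓝 (∫ y, f y ∂μ)) := by
  have hε : ∀ k : ℕ, (0:ℝ) < 1 / ((k:ℝ) + 1) := fun k => Nat.one_div_pos_of_nat
  have h1 : ∀ k : ℕ, _ := fun k : ℕ =>
    Wb_upper hφ hf hi (∫ y, f y ∂μ + 1 / ((k:ℝ) + 1)) (by linarith [hε k])
  have h2 : ∀ k : ℕ, _ := fun k : ℕ =>
    Wb_upper hφ (f := fun y => - f y) hf.neg hi.neg (-∫ y, f y ∂μ + 1 / ((k:ℝ) + 1))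
      (by rw [integral_neg]; linarith [hε k])
  filter_upwards [ae_all_iff.2 h1, ae_all_iff.2 h2] with x hx1 hx2
  rw [Metric.tendsto_atTop]
  intro ε hεp
  obtain ⟨k, hk⟩ := exists_nat_one_div_lt (half_pos hεp)
  obtain ⟨b1, hb1⟩ := hx1 k
  obtain ⟨b2, hb2⟩ := hx2 k
  refine ⟨max 1 (2 * max b1 b2 / ε + 1), fun T hT => ?_⟩
  have hT0 : 0 < T := zero_lt_one.trans_le ((le_max_left _ _).trans hT)
  have hT2 : 2 * max b1 b2 / ε < T := by linarith [(le_max_right _ _).trans hT]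
  rw [div_lt_iff₀ hεp] at hT2
  have u1 := hb1 T hT0.le
  have u2 := hb2 T hT0.le
  unfold WbG at u1 u2
  rw [intervalIntegral.integral_neg] at u2
  have hm1 := le_max_left b1 b2
  have hm2 := le_max_right b1 b2
  have hkT : 1 / ((k:ℝ) + 1) * T < ε / 2 * T := mul_lt_mul_of_pos_right hk hT0
  rw [Real.dist_eq]
  have e : T⁻¹ * (∫ t in (0:ℝ)..T, f (φ t x)) - ∫ y, f y ∂μ =
      T⁻¹ * ((∫ t in (0:ℝ)..T, f (φ t x)) - (∫ y, f y ∂μ) * T) := by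
    field_simp
  rw [e, abs_mul, abs_of_pos (inv_pos.2 hT0), inv_mul_lt_iff₀ hT0, abs_lt]
  constructor <;> nlinarith

end flow

/-- **Polynomially weighted Birkhoff pointwise ergodic theorem for flows.**
Let `(h_t)` be a jointly measurable measure-preserving ergodic flow on a standard
probability space `(X,μ)` and let `ψ : [0,∞) → [0,∞)` be continuous with
`|ψ(t) − C t^κ| ≤ C₁ (1 + t^{κ'})` for constants `C > 0`, `κ > κ' > 0`, `C₁ ≥ 0`.
Then for every `f ∈ L¹(X,μ)` the weighted averages
`A_T f(x) = (∫_0^T ψ)⁻¹ ∫_0^T f(h_{-t} x) ψ(t) dt` converge to `∫ f dμ` for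
`μ`-a.e. `x` as `T → ∞`. -/
theorem weighted_birkhoff_pointwise_ergodic
    (X : Type) [MeasurableSpace X] [StandardBorelSpace X]
    (μ : Measure X) [IsProbabilityMeasure μ]
    (h : ℝ → X → X)
    (h_zero : ∀ x, h 0 x = x)
    (h_add : ∀ s t x, h (s + t) x = h s (h t x))
    (h_meas : Measurable fun q : ℝ × X => h q.1 q.2)
    (h_mp : ∀ t : ℝ, MeasurePreserving (h t) μ μ)
    (h_erg : ∀ s : Set X, MeasurableSet s → (∀ t : ℝ, h t ⁻¹' s = s) → μ s = 0 ∨ μ s = 1)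
    (ψ : ℝ → ℝ)
    (hψ_cont : ContinuousOn ψ (Set.Ici 0))
    (hψ_nonneg : ∀ t : ℝ, 0 ≤ t → 0 ≤ ψ t)
    (C κ κ' C₁ : ℝ) (hC : 0 < C) (hκ'pos : 0 < κ') (hκ : κ' < κ) (hC₁ : 0 ≤ C₁)
    (hbound : ∀ t : ℝ, 0 ≤ t → |ψ t - C * t ^ κ| ≤ C₁ * (1 + t ^ κ'))
    (f : X → ℝ) (hf : Integrable f μ) :
    ∀ᵐ x ∂μ, Tendsto
      (fun T : ℝ => (∫ t in (0:ℝ)..T, ψ t)⁻¹ * ∫ t in (0:ℝ)..T, f (h (-t) x) * ψ t)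
      atTop (𝓝 (∫ y, f y ∂μ)) := by
  have hφ : WbFlow μ (fun t => h (-t)) :=
    { zero := fun x => by simp [h_zero]
      add := fun s t x => by rw [neg_add, h_add]
      meas := h_meas.comp ((measurable_fst.neg).prodMk measurable_snd)
      mp := fun t => h_mp (-t)
      erg := fun s hs hinv => h_erg s hs fun t => by simpa using hinv (-t) }
  set f' := hf.aestronglyMeasurable.mk f with hf'
  have hff' : f =ᵐ[μ] f' := hf.aestronglyMeasurable.ae_eq_mk
  have hm : Measurable f' := hf.aestronglyMeasurable.stronglyMeasurable_mk.measurable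
  have hi : Integrable f' μ := hf.congr hff'
  have hae : ∀ᵐ x ∂μ, ∀ᵐ t : ℝ, f (h (-t) x) = f' (h (-t) x) := by
    obtain ⟨S, hS, hSm, hS0⟩ := exists_measurable_superset_of_null (ae_iff.1 hff')
    have h1 : ∀ᵐ t : ℝ, ∀ᵐ x ∂μ, h (-t) x ∉ S := Eventually.of_forall fun t =>
      (h_mp (-t)).quasiMeasurePreserving.ae (measure_eq_zero_iff_ae_notMem.1 hS0)
    rw [Measure.ae_ae_comm (hφ.meas hSm).compl] at h1
    filter_upwards [h1] with x hx
    filter_upwards [hx] with t ht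
    by_contra hne
    exact ht (hS hne)
  filter_upwards [hae, WbL_ae hφ hm hi, Wb_birkhoff hφ hm hi, Wb_birkhoff hφ hm.abs hi.abs]
    with x hx hL hB hB'
  have key := wb_final (fun t => f' (h (-t) x)) _ _ (fun T => hL 0 T) hB hB' ψ hψ_cont
    C κ κ' C₁ hC hκ'pos hκ hC₁ hbound
  rw [integral_congr_ae hff']
  refine key.congr fun T => ?_
  congr 1
  refine intervalIntegral.integral_congr_ae ?_
  filter_upwards [hx] with t ht _
  rw [ht]
end
end

section
/- Let (h_t)_{t∈ℝ} be a jointly measurable measure-preserving ergodic flow on a standard probability space (X,μ). Let ψ : [0,∞) → [0,∞) be a continuous function for which there exist constants C > 0, κ > κ' > 0 and C₁ ≥ 0 with |ψ(t) − C t^κ| ≤ C₁ (1 + t^{κ'}) for all t ≥ 0. Fix b > 0 and ε > 0. Then for every f ∈ L^1(X,μ), the shell averages A_{r,ε} f(x) = (∫_{2 sinh(br)}^{2 sinh(b(r+ε))} ψ(t) dt)^{−1} ∫_{2 sinh(br)}^{2 sinh(b(r+ε))} f(h_{−t} x) ψ(t) dt converge to ∫_X f dμ for μ-almost every x ∈ X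 as r → ∞. -/
open MeasureTheory Filter Topology

noncomputable section

set_option linter.unusedSectionVars false

/-- local integrability along orbits -/
def OrbInt {X : Type} (φ : ℝ → X → X) (f : X → ℝ) (x : X) : Prop :=
  ∀ a b : ℝ, IntervalIntegrable (fun s => f (φ s x)) volume a b

structure IsFlow {X : Type} [MeasurableSpace X] (μ : Measure X) (φ : ℝ → X → X) : Prop where
  zero : ∀ x, φ 0 x = x
  add : ∀ s t x, φ (s + t) x = φ s (φ t x)
  meas : Measurable fun q : ℝ × X => φ q.1 q.2
  mp : ∀ t : ℝ, MeasurePreserving (φ t) μ μ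
  erg : ∀ s : Set X, MeasurableSet s → (∀ t : ℝ, φ t ⁻¹' s = s) → μ s = 0 ∨ μ s = 1

section
variable {X : Type} [MeasurableSpace X] {μ : Measure X} [IsProbabilityMeasure μ]
  {φ : ℝ → X → X} {f : X → ℝ}

lemma IsFlow.integrable_prod (hφ : IsFlow μ φ) (hfm : Measurable f) (hf : Integrable f μ)
    (ν : Measure ℝ) [IsFiniteMeasure ν] :
    Integrable (fun q : ℝ × X => f (φ q.1 q.2)) (ν.prod μ) := by
  have hm : Measurable (fun q : ℝ × X => f (φ q.1 q.2)) := hfm.comp hφ.meas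
  rw [integrable_prod_iff hm.aestronglyMeasurable]
  constructor
  · exact Eventually.of_forall fun t => (hφ.mp t).integrable_comp_of_integrable hf
  · have : ∀ t, ∫ y, ‖f (φ t y)‖ ∂μ = ∫ y, ‖f y‖ ∂μ := by
      intro t
      have h1 : AEStronglyMeasurable (fun y => ‖f y‖) (μ.map (φ t)) := by
        rw [(hφ.mp t).map_eq]; exact hf.norm.aestronglyMeasurable
      have := integral_map (hφ.mp t).measurable.aemeasurable h1
      rw [(hφ.mp t).map_eq] at this
      exact this.symm
    simp only [this]
    exact integrable_const _

lemma IsFlow.ae_orbInt (hφ : IsFlow μ φ) (hfm : Measurable f) (hf : Integrable f μ) :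
    ∀ᵐ x ∂μ, OrbInt φ f x := by
  have h1 : ∀ᵐ x ∂μ, ∀ n : ℕ, Integrable (fun s => f (φ s x))
      (volume.restrict (Set.Ioc (-(n:ℝ)) n)) := by
    rw [ae_all_iff]
    intro n
    have := hφ.integrable_prod hfm hf (volume.restrict (Set.Ioc (-(n:ℝ)) n))
    exact this.prod_left_ae
  filter_upwards [h1] with x hx a b
  obtain ⟨n, hn⟩ := exists_nat_gt (max |a| |b|)
  rw [intervalIntegrable_iff]
  refine IntegrableOn.mono_set (hx n) ?_
  have ha := abs_lt.1 (lt_of_le_of_lt (le_max_left _ _) hn)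
  have hb := abs_lt.1 (lt_of_le_of_lt (le_max_right _ _) hn)
  intro t ht
  rw [Set.mem_uIoc] at ht
  constructor <;> rcases ht with h | h <;> linarith [h.1, h.2]

lemma orbInt_measurableSet (hφ : IsFlow μ φ) (hfm : Measurable f) :
    MeasurableSet {x | OrbInt φ f x} := by
  have : {x | OrbInt φ f x} = ⋂ n : ℕ, {x | Integrable (fun s => f (φ s x))
      (volume.restrict (Set.Ioc (-(n:ℝ)) n))} := by
    ext x
    simp only [Set.mem_ofPred_eq, Set.mem_iInter]
    constructor
    · intro h n
      exact (intervalIntegrable_iff_integrableOn_Ioc_of_le (by linarith [n.cast_nonneg (α := ℝ)])).1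
        (h _ _)
    · intro hx a b
      obtain ⟨n, hn⟩ := exists_nat_gt (max |a| |b|)
      rw [intervalIntegrable_iff]
      refine IntegrableOn.mono_set (hx n) ?_
      have ha := abs_lt.1 (lt_of_le_of_lt (le_max_left _ _) hn)
      have hb := abs_lt.1 (lt_of_le_of_lt (le_max_right _ _) hn)
      intro t ht
      rw [Set.mem_uIoc] at ht
      constructor <;> rcases ht with h | h <;> linarith [h.1, h.2]
  rw [this]
  refine MeasurableSet.iInter fun n => ?_
  refine measurableSet_integrable (f := fun x s => f (φ s x)) ?_
  exact (hfm.comp (hφ.meas.comp measurable_swap)).stronglyMeasurable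

lemma OrbInt.shift (hφ : IsFlow μ φ) {x : X} (h : OrbInt φ f x) (u : ℝ) :
    OrbInt φ f (φ u x) := by
  intro a b
  have := (h (a + u) (b + u)).comp_add_right u
  simp only [add_sub_cancel_right] at this
  simpa only [hφ.add] using this

/-- orbit integral -/
def orbS (φ : ℝ → X → X) (f : X → ℝ) (t : ℝ) (x : X) : ℝ := ∫ s in (0:ℝ)..t, f (φ s x)

lemma orbS_shift (hφ : IsFlow μ φ) {x : X} (h : OrbInt φ f x) (u t : ℝ) :
    orbS φ f t (φ u x) = orbS φ f (t + u) x - orbS φ f u x := by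
  unfold orbS
  simp only [← hφ.add]
  rw [intervalIntegral.integral_comp_add_right (fun s => f (φ s x)), zero_add,
    intervalIntegral.integral_interval_sub_left (h _ _) (h _ _)]

lemma orbS_continuous {x : X} (h : OrbInt φ f x) : Continuous fun t => orbS φ f t x :=
  intervalIntegral.continuous_primitive h 0

lemma orbS_measurable (hφ : IsFlow μ φ) (hfm : Measurable f) (t : ℝ) :
    Measurable (orbS φ f t) := by
  have : StronglyMeasurable (Function.uncurry fun (x : X) (s : ℝ) => f (φ s x)) :=
    (hfm.comp (hφ.meas.comp measurable_swap)).stronglyMeasurable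
  unfold orbS
  simp only [intervalIntegral]
  exact (this.integral_prod_right.sub this.integral_prod_right).measurable

lemma orbS_one_integrable (hφ : IsFlow μ φ) (hfm : Measurable f) (hf : Integrable f μ) :
    Integrable (orbS φ f 1) μ := by
  have := (hφ.integrable_prod hfm hf (volume.restrict (Set.Ioc (0:ℝ) 1))).integral_prod_right
  unfold orbS
  simpa only [intervalIntegral.integral_of_le zero_le_one] using this

lemma orbS_one_integral (hφ : IsFlow μ φ) (hfm : Measurable f) (hf : Integrable f μ) :
    ∫ x, orbS φ f 1 x ∂μ = ∫ x, f x ∂μ := by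
  have h1 := (hφ.integrable_prod hfm hf (volume.restrict (Set.Ioc (0:ℝ) 1)))
  have h2 := integral_integral_swap (f := fun s x => f (φ s x)) h1
  unfold orbS
  simp only [intervalIntegral.integral_of_le zero_le_one]
  rw [← h2]
  have : ∀ t, ∫ y, f (φ t y) ∂μ = ∫ y, f y ∂μ := by
    intro t
    have h1 : AEStronglyMeasurable f (μ.map (φ t)) := hfm.aestronglyMeasurable
    have := integral_map (hφ.mp t).measurable.aemeasurable h1
    rw [(hφ.mp t).map_eq] at this
    exact this.symm
  simp [this]

/-- maximal envelope -/
def envM (φ : ℝ → X → X) (f : X → ℝ) : ℕ → X → ℝ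
  | 0 => fun _ => 0
  | n + 1 => fun x => max (orbS φ (fun y => |f y|) 1 x) (orbS φ f 1 x + envM φ f n (φ 1 x))

lemma orbS_abs_le (x : X) : |orbS φ f 1 x| ≤ orbS φ (fun y => |f y|) 1 x :=
  intervalIntegral.abs_integral_le_integral_abs zero_le_one

lemma envM_mono (n : ℕ) : ∀ x, envM φ f n x ≤ envM φ f (n + 1) x := by
  induction n with
  | zero =>
    intro x
    exact le_max_of_le_left ((abs_nonneg _).trans (orbS_abs_le x))
  | succ n ih =>
    intro x
    exact max_le_max le_rfl (by linarith [ih (φ 1 x)])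

lemma envM_nonneg (n : ℕ) (x : X) : 0 ≤ envM φ f n x := by
  induction n with
  | zero => exact le_rfl
  | succ n ih => exact ih.trans (envM_mono n x)

lemma envM_integrable (hφ : IsFlow μ φ) (hfm : Measurable f) (hf : Integrable f μ) (n : ℕ) :
    Integrable (envM φ f n) μ := by
  induction n with
  | zero => exact integrable_zero _ _ _
  | succ n ih =>
    refine Integrable.sup (orbS_one_integrable hφ hfm.abs hf.abs) ?_
    exact (orbS_one_integrable hφ hfm hf).add ((hφ.mp 1).integrable_comp_of_integrable ih)

lemma orbS_le_envM (hφ : IsFlow μ φ) (n : ℕ) : ∀ x, OrbInt φ f x → ∀ t : ℝ, 0 ≤ t → t ≤ n →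
    orbS φ f t x ≤ envM φ f n x := by
  induction n with
  | zero =>
    intro x _ t h0 h1
    have : t = 0 := by simp at h1; linarith
    subst this
    simp [orbS, envM]
  | succ n ih =>
    intro x hx t h0 h1
    rcases le_total t 1 with ht | ht
    · refine le_max_of_le_left ?_
      calc orbS φ f t x ≤ orbS φ (fun y => |f y|) t x :=
            intervalIntegral.integral_mono_on h0 (hx _ _) (hx _ _).abs fun s _ => le_abs_self _
        _ ≤ _ := by
            refine intervalIntegral.integral_mono_interval le_rfl h0 ht ?_ (hx _ _).abs
            exact Eventually.of_forall fun s => abs_nonneg _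
    · refine le_max_of_le_right ?_
      have h2 := ih (φ 1 x) (hx.shift hφ 1) (t - 1) (by linarith) (by push_cast at h1; linarith)
      rw [orbS_shift hφ hx, sub_add_cancel] at h2
      linarith

def badA (φ : ℝ → X → X) (f : X → ℝ) : Set X :=
  {x | OrbInt φ f x ∧ ∀ N : ℕ, ∃ q : ℚ, (0:ℝ) ≤ q ∧ (N : ℝ) < orbS φ f q x}

lemma badA_measurable (hφ : IsFlow μ φ) (hfm : Measurable f) : MeasurableSet (badA φ f) := by
  have : badA φ f = {x | OrbInt φ f x} ∩ ⋂ N : ℕ, ⋃ q : ℚ, ⋃ _ : (0:ℝ) ≤ q,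
      {x | (N : ℝ) < orbS φ f q x} := by
    ext x; simp [badA]
  rw [this]
  refine (orbInt_measurableSet hφ hfm).inter (MeasurableSet.iInter fun N =>
    MeasurableSet.iUnion fun q => MeasurableSet.iUnion fun _ => ?_)
  exact measurableSet_lt measurable_const (orbS_measurable hφ hfm _)

lemma mem_badA_iff {x : X} (h : OrbInt φ f x) :
    x ∈ badA φ f ↔ ∀ N : ℝ, ∃ t : ℝ, 0 ≤ t ∧ N < orbS φ f t x := by
  constructor
  · rintro ⟨_, h2⟩ N
    obtain ⟨n, hn⟩ := exists_nat_gt N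
    obtain ⟨q, h0, hq⟩ := h2 n
    exact ⟨q, h0, hn.trans hq⟩
  · intro h2
    refine ⟨h, fun N => ?_⟩
    obtain ⟨t, h0, ht⟩ := h2 N
    have hpos : 0 < t := by
      rcases h0.lt_or_eq with h | h
      · exact h
      · subst h
        simp [orbS] at ht
        exact absurd ht (by simp [← not_le])
    have hopen : IsOpen ({t | (N : ℝ) < orbS φ f t x} ∩ Set.Ioi 0) :=
      (isOpen_lt continuous_const (orbS_continuous h)).inter isOpen_Ioi
    obtain ⟨q, hq⟩ := Rat.denseRange_cast.exists_mem_open hopen ⟨t, ht, hpos⟩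
    exact ⟨q, le_of_lt hq.2, hq.1⟩

lemma badA_shift (hφ : IsFlow μ φ) {x : X} (hx : x ∈ badA φ f) (u : ℝ) : φ u x ∈ badA φ f := by
  have hi := hx.1
  rw [mem_badA_iff (hi.shift hφ u)]
  rw [mem_badA_iff hi] at hx
  intro N
  obtain ⟨K, hK⟩ := (isCompact_Icc (a := (0:ℝ)) (b := |u|)).bddAbove_image
    (orbS_continuous hi).continuousOn
  obtain ⟨t, h0, ht⟩ := hx (max (N + orbS φ f u x) K)
  have h1 : |u| < t := by
    by_contra hc
    push Not at hc
    have := hK (Set.mem_image_of_mem _ ⟨h0, hc⟩)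
    have h3 := (le_max_right _ _).trans_lt ht
    linarith
  refine ⟨t - u, by linarith [le_abs_self u], ?_⟩
  rw [orbS_shift hφ hi, sub_add_cancel]
  have h3 := (le_max_left _ _).trans_lt ht
  linarith

lemma badA_inv (hφ : IsFlow μ φ) (u : ℝ) : φ u ⁻¹' (badA φ f) = badA φ f := by
  ext x
  constructor
  · intro hx
    have := badA_shift hφ hx (-u)
    rwa [← hφ.add, neg_add_cancel, hφ.zero] at this
  · intro hx
    exact badA_shift hφ hx u

lemma badA_integral_nonneg (hφ : IsFlow μ φ) (hfm : Measurable f) (hf : Integrable f μ) :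
    0 ≤ ∫ x in badA φ f, orbS φ f 1 x ∂μ := by
  set A := badA φ f
  have hA : MeasurableSet A := badA_measurable hφ hfm
  have hmp : MeasurePreserving (φ 1) (μ.restrict A) (μ.restrict A) := by
    have := (hφ.mp 1).restrict_preimage hA
    rwa [badA_inv hφ] at this
  have hlim : Tendsto (fun n : ℕ => ∫ x in A, (envM φ f (n+1) x - envM φ f n (φ 1 x)) ∂μ) atTop
      (𝓝 (∫ x in A, orbS φ f 1 x ∂μ)) := by
    refine tendsto_integral_of_dominated_convergence (orbS φ (fun y => |f y|) 1) ?_ ?_ ?_ ?_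
    · intro n
      exact ((envM_integrable hφ hfm hf (n+1)).sub
        ((hφ.mp 1).integrable_comp_of_integrable (envM_integrable hφ hfm hf n))).restrict.aestronglyMeasurable
    · exact (orbS_one_integrable hφ hfm.abs hf.abs).restrict
    · intro n
      refine Eventually.of_forall fun x => ?_
      have h1 := abs_le.1 (orbS_abs_le (φ := φ) (f := f) x)
      have h2 := envM_nonneg (φ := φ) (f := f) n (φ 1 x)
      rw [Real.norm_eq_abs, abs_le]
      simp only [envM]
      constructor
      · linarith [le_max_right (orbS φ (fun y => |f y|) 1 x) (orbS φ f 1 x + envM φ f n (φ 1 x))]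
      · rw [sub_le_iff_le_add]
        exact max_le (by linarith) (by linarith)
    · rw [ae_restrict_iff' hA]
      refine Eventually.of_forall fun x hx => ?_
      have hx1 := badA_shift hφ hx 1
      obtain ⟨t, h0, ht⟩ := (mem_badA_iff hx1.1).1 hx1
        (orbS φ (fun y => |f y|) 1 x - orbS φ f 1 x)
      refine tendsto_const_nhds.congr' ?_
      obtain ⟨n0, hn0⟩ := exists_nat_ge t
      filter_upwards [eventually_ge_atTop n0] with n hn
      have hle : t ≤ n := hn0.trans (by exact_mod_cast hn)
      have h3 := orbS_le_envM hφ n (φ 1 x) hx1.1 t h0 hle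
      simp only [envM]
      rw [max_eq_right (by linarith)]
      ring
  refine ge_of_tendsto' hlim fun n => ?_
  have hi2 : Integrable (fun x => envM φ f n (φ 1 x)) (μ.restrict A) :=
    ((hφ.mp 1).integrable_comp_of_integrable (envM_integrable hφ hfm hf n)).restrict
  rw [integral_sub (envM_integrable hφ hfm hf (n+1)).restrict hi2]
  have h1 : ∫ x in A, envM φ f n (φ 1 x) ∂μ = ∫ x in A, envM φ f n x ∂μ := by
    have h1 : AEStronglyMeasurable (envM φ f n) ((μ.restrict A).map (φ 1)) := by
      rw [hmp.map_eq]; exact (envM_integrable hφ hfm hf n).restrict.aestronglyMeasurable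
    have := integral_map hmp.measurable.aemeasurable h1
    rw [hmp.map_eq] at this
    exact this.symm
  rw [h1, sub_nonneg]
  exact integral_mono (envM_integrable hφ hfm hf n).restrict
    (envM_integrable hφ hfm hf (n+1)).restrict (envM_mono n)

lemma ae_bdd_of_neg (hφ : IsFlow μ φ) (hfm : Measurable f) (hf : Integrable f μ)
    (hneg : ∫ x, f x ∂μ < 0) :
    ∀ᵐ x ∂μ, ∃ N : ℝ, ∀ t : ℝ, 0 ≤ t → orbS φ f t x ≤ N := by
  have hA0 : μ (badA φ f) = 0 := by
    rcases hφ.erg _ (badA_measurable hφ hfm) (badA_inv hφ) with h | h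
    · exact h
    · exfalso
      have h1 := badA_integral_nonneg hφ hfm hf
      have h2 : badA φ f =ᵐ[μ] Set.univ := by
        rw [ae_eq_univ]
        exact (prob_compl_eq_zero_iff (badA_measurable hφ hfm)).2 h
      rw [setIntegral_congr_set h2, setIntegral_univ, orbS_one_integral hφ hfm hf] at h1
      linarith
  have h2 : ∀ᵐ x ∂μ, x ∉ badA φ f := measure_eq_zero_iff_ae_notMem.1 hA0
  filter_upwards [h2, hφ.ae_orbInt hfm hf] with x hx hi
  rw [mem_badA_iff hi] at hx
  push Not at hx
  exact hx

lemma birkhoff_upper (hφ : IsFlow μ φ) (hfm : Measurable f) (hf : Integrable f μ) :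
    ∀ᵐ x ∂μ, ∀ δ : ℝ, 0 < δ → ∀ᶠ t in atTop, orbS φ f t x ≤ (∫ y, f y ∂μ + δ) * t := by
  set c := ∫ y, f y ∂μ
  have h1 : ∀ k : ℕ, ∀ᵐ x ∂μ, ∃ N : ℝ, ∀ t : ℝ, 0 ≤ t →
      orbS φ (fun y => f y - (c + 1 / ((k:ℝ) + 1))) t x ≤ N := by
    intro k
    refine ae_bdd_of_neg hφ (hfm.sub_const _) (hf.sub (integrable_const _)) ?_
    rw [integral_sub hf (integrable_const _)]
    have : (0:ℝ) < 1 / ((k:ℝ) + 1) := by positivity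
    simp only [integral_const, probReal_univ, one_smul]
    change c - _ < 0
    linarith
  rw [← ae_all_iff] at h1
  filter_upwards [h1, hφ.ae_orbInt hfm hf] with x hx hi δ hδ
  obtain ⟨k, hk⟩ := exists_nat_one_div_lt (half_pos hδ)
  obtain ⟨N, hN⟩ := hx k
  filter_upwards [eventually_ge_atTop 0, eventually_ge_atTop (N / (δ/2))] with t h0 ht
  have h3 := hN t h0
  have h4 : orbS φ (fun y => f y - (c + 1 / ((k:ℝ) + 1))) t x
      = orbS φ f t x - t * (c + 1 / ((k:ℝ) + 1)) := by
    unfold orbS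
    rw [intervalIntegral.integral_sub (hi _ _) (by simp), intervalIntegral.integral_const, sub_zero, smul_eq_mul]
  rw [h4] at h3
  rw [div_le_iff₀ (by positivity)] at ht
  nlinarith

lemma birkhoff (hφ : IsFlow μ φ) (hfm : Measurable f) (hf : Integrable f μ) :
    ∀ᵐ x ∂μ, OrbInt φ f x ∧ ∀ δ : ℝ, 0 < δ → ∀ᶠ t in atTop,
      |orbS φ f t x - (∫ y, f y ∂μ) * t| ≤ δ * t := by
  filter_upwards [hφ.ae_orbInt hfm hf, birkhoff_upper hφ hfm hf,
    birkhoff_upper hφ hfm.neg hf.neg] with x hi h1 h2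
  refine ⟨hi, fun δ hδ => ?_⟩
  filter_upwards [h1 δ hδ, h2 δ hδ] with t h3 h4
  have h5 : orbS φ (-f) t x = - orbS φ f t x := by
    unfold orbS
    simp
  have h6 : ∫ y, (-f) y ∂μ = - ∫ y, f y ∂μ := by simp [integral_neg]
  rw [h5, h6] at h4
  rw [abs_le]
  constructor <;> nlinarith

lemma ae_orbit_congr (hφ : IsFlow μ φ) {g : X → ℝ} (hfg : f =ᵐ[μ] g) :
    ∀ᵐ x ∂μ, ∀ᵐ t, f (φ t x) = g (φ t x) := by
  obtain ⟨s, hs, hsm, hs0⟩ := exists_measurable_superset_of_null (ae_iff.1 hfg)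
  have h1 : ∀ᵐ x ∂μ, ∀ᵐ t, φ t x ∉ s := by
    rw [Measure.ae_ae_comm]
    · refine Eventually.of_forall fun t => ?_
      exact (hφ.mp t).quasiMeasurePreserving.ae (measure_eq_zero_iff_ae_notMem.1 hs0)
    · exact (hφ.meas.comp measurable_swap) hsm.compl
  filter_upwards [h1] with x hx
  filter_upwards [hx] with t ht
  by_contra hc
  exact ht (hs hc)

end

lemma parts_bound {G : ℝ → ℝ} (hG : ∀ a b, IntervalIntegrable G volume a b) {κ a B δ : ℝ}
    (hκ : 0 < κ) (ha : 0 < a) (hab : a ≤ B)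
    (hH : ∀ t ∈ Set.Icc a B, |∫ s in (0:ℝ)..t, G s| ≤ δ) :
    |∫ t in a..B, t ^ κ * G t| ≤ 2 * δ * B ^ κ := by
  set H : ℝ → ℝ := fun t => ∫ s in (0:ℝ)..t, G s with hHdef
  have hB : 0 < B := ha.trans_le hab
  have hHac : AbsolutelyContinuousOnInterval H a B := by
    have := (hG 0 B).absolutelyContinuousOnInterval_intervalIntegral (c := 0) (by simp)
    refine this.mono ?_
    rw [Set.uIcc_of_le hab, Set.uIcc_of_le hB.le]
    exact Set.Icc_subset_Icc_left ha.le
  have hwac : AbsolutelyContinuousOnInterval (fun t : ℝ => t ^ κ) a B := by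
    apply ContDiffOn.absolutelyContinuousOnInterval
    intro t ht
    rw [Set.uIcc_of_le hab] at ht
    exact (Real.contDiffAt_rpow_const_of_ne (ha.trans_le ht.1).ne').contDiffWithinAt
  have hder : ∫ t in a..B, t ^ κ * G t = ∫ t in a..B, t ^ κ * deriv H t := by
    apply intervalIntegral.integral_congr_ae
    filter_upwards [(hG 0 B).ae_hasDerivAt_integral] with t ht hmem
    rw [Set.uIoc_of_le hab] at hmem
    have := ht (by rw [Set.uIcc_of_le hB.le]; exact ⟨(ha.trans hmem.1).le, hmem.2⟩) 0 (by simp)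
    rw [this.deriv]
  rw [hder, hwac.integral_mul_deriv_eq_deriv_mul hHac]
  have h1 : |∫ t in a..B, deriv (fun t : ℝ => t ^ κ) t * H t| ≤ δ * (B ^ κ - a ^ κ) := by
    rw [← hwac.integral_deriv_eq_sub, ← intervalIntegral.integral_const_mul]
    rw [← Real.norm_eq_abs]
    refine intervalIntegral.norm_integral_le_of_norm_le hab ?_
      (hwac.intervalIntegrable_deriv.const_mul δ)
    refine Eventually.of_forall fun t ht => ?_
    have ht0 : 0 < t := ha.trans ht.1
    have hd : deriv (fun t : ℝ => t ^ κ) t = κ * t ^ (κ - 1) :=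
      Real.deriv_rpow_const t κ
    have hd0 : 0 ≤ deriv (fun t : ℝ => t ^ κ) t := by rw [hd]; positivity
    rw [Real.norm_eq_abs, abs_mul, abs_of_nonneg hd0, mul_comm]
    exact mul_le_mul_of_nonneg_right (hH t ⟨ht.1.le, ht.2⟩) hd0
  have hwa : 0 ≤ a ^ κ := by positivity
  have hwB : 0 ≤ B ^ κ := by positivity
  have h2 : |B ^ κ * H B| ≤ B ^ κ * δ := by
    rw [abs_mul, abs_of_nonneg hwB]
    exact mul_le_mul_of_nonneg_left (hH B ⟨hab, le_rfl⟩) hwB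
  have h3 : |a ^ κ * H a| ≤ a ^ κ * δ := by
    rw [abs_mul, abs_of_nonneg hwa]
    exact mul_le_mul_of_nonneg_left (hH a ⟨le_rfl, hab⟩) hwa
  rw [abs_le] at *
  constructor <;> linarith [h1.1, h1.2, h2.1, h2.2, h3.1, h3.2]

lemma pow_dom {κ κ' : ℝ} (hκ' : 0 < κ') (hκ : κ' < κ) (M δ : ℝ) (hδ : 0 < δ) :
    ∀ᶠ B : ℝ in atTop, M * (1 + B ^ κ') ≤ δ * B ^ κ := by
  have h1 : Tendsto (fun B : ℝ => M * (B ^ (-κ) + B ^ (-(κ - κ')))) atTop (𝓝 (M * (0 + 0))) :=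
    ((tendsto_rpow_neg_atTop (hκ'.trans hκ)).add
      (tendsto_rpow_neg_atTop (sub_pos.2 hκ))).const_mul M
  rw [add_zero, mul_zero] at h1
  filter_upwards [h1.eventually_lt_const hδ, eventually_gt_atTop 0] with B h hB
  have e1 : B ^ (-κ) * B ^ κ = 1 := by rw [← Real.rpow_add hB]; simp
  have e2 : B ^ (-(κ - κ')) * B ^ κ = B ^ κ' := by rw [← Real.rpow_add hB]; congr 1; ring
  have := mul_le_mul_of_nonneg_right h.le (Real.rpow_nonneg hB.le κ)
  calc M * (1 + B ^ κ') = M * (B ^ (-κ) + B ^ (-(κ - κ'))) * B ^ κ := by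
        rw [← e1, ← e2]; ring
    _ ≤ _ := this

lemma shell_lemma {g : ℝ → ℝ} (hg : ∀ a b, IntervalIntegrable g volume a b) {c K : ℝ}
    (h1 : ∀ δ : ℝ, 0 < δ → ∀ᶠ t in atTop, |(∫ s in (0:ℝ)..t, g s) - c * t| ≤ δ * t)
    (h2 : ∀ᶠ t in atTop, (∫ s in (0:ℝ)..t, |g s|) ≤ K * t)
    (ψ : ℝ → ℝ)
    (hψ_cont : ContinuousOn ψ (Set.Ici 0))
    (C κ κ' C₁ : ℝ) (hC : 0 < C) (hκ'pos : 0 < κ') (hκ : κ' < κ) (hC₁ : 0 ≤ C₁)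
    (hbound : ∀ t : ℝ, 0 ≤ t → |ψ t - C * t ^ κ| ≤ C₁ * (1 + t ^ κ'))
    (lo hi : ℝ → ℝ) (η : ℝ) (hη : 0 < η) (hlo : ∀ᶠ r in atTop, η * hi r ≤ lo r)
    (hgap : ∀ᶠ r in atTop, η * hi r ≤ hi r - lo r) (hhi : Tendsto hi atTop atTop) :
    Tendsto (fun r => (∫ t in (lo r)..(hi r), ψ t)⁻¹ * ∫ t in (lo r)..(hi r), g t * ψ t)
      atTop (𝓝 c) := by
  have hκ0 : 0 < κ := hκ'pos.trans hκ
  have hlot : Tendsto lo atTop atTop :=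
    tendsto_atTop_mono' _ hlo (hhi.const_mul_atTop hη)
  set G : ℝ → ℝ := fun t => g t - c with hGdef
  have hG : ∀ a b, IntervalIntegrable G volume a b := fun a b => (hg a b).sub (by simp)
  set q : ℝ := C / 2 * η ^ κ * η with hq
  have hq0 : 0 < q := by positivity
  rw [Metric.tendsto_nhds]
  intro e he
  set δ : ℝ := e * q / (2 * (2 * C + 1)) with hδdef
  have hδ : 0 < δ := by positivity
  obtain ⟨T1, hT1⟩ := eventually_atTop.1 (h1 δ hδ)
  obtain ⟨T2, hT2⟩ := eventually_atTop.1 (pow_dom hκ'pos hκ C₁ (C / 2) (by positivity))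
  filter_upwards [hlo, hgap, hlot.eventually_ge_atTop T1, hlot.eventually_ge_atTop T2,
    hlot.eventually_gt_atTop 0, hhi.eventually h2,
    hhi.eventually (pow_dom hκ'pos hκ (C₁ * (K + |c|)) δ hδ), hhi.eventually_gt_atTop 0]
    with r k1 k2 k3 k4 k5 k6 k7 k8
  set a := lo r
  set B := hi r
  have hab : a ≤ B := by nlinarith
  have hBk : 0 < B ^ κ := by positivity
  have hψc : ContinuousOn ψ (Set.uIcc a B) := by
    rw [Set.uIcc_of_le hab]
    exact hψ_cont.mono fun t ht => k5.le.trans ht.1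
  have hψi : IntervalIntegrable ψ volume a B := hψc.intervalIntegrable
  have hpc : ContinuousOn (fun t : ℝ => t ^ κ) (Set.uIcc a B) :=
    (Real.continuous_rpow_const hκ0.le).continuousOn
  -- denominator
  have hD : q * (B ^ κ * B) ≤ ∫ t in a..B, ψ t := by
    have e1 : ∫ t in a..B, C / 2 * a ^ κ ≤ ∫ t in a..B, ψ t := by
      refine intervalIntegral.integral_mono_on hab (by simp) hψi fun t ht => ?_
      have ht0 : 0 < t := k5.trans_le ht.1
      have b1 := (abs_le.1 (hbound t ht0.le)).1
      have b2 := hT2 t (k4.trans ht.1)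
      have b3 : a ^ κ ≤ t ^ κ := Real.rpow_le_rpow k5.le ht.1 hκ0.le
      nlinarith
    rw [intervalIntegral.integral_const, smul_eq_mul] at e1
    have e2 : η ^ κ * B ^ κ ≤ a ^ κ := by
      rw [← Real.mul_rpow hη.le k8.le]
      exact Real.rpow_le_rpow (by positivity) k1 hκ0.le
    calc q * (B ^ κ * B) = (η * B) * (C / 2 * (η ^ κ * B ^ κ)) := by rw [hq]; ring
      _ ≤ (B - a) * (C / 2 * a ^ κ) := by gcongr
      _ ≤ _ := e1
  have hD0 : 0 < ∫ t in a..B, ψ t := lt_of_lt_of_le (by positivity) hD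
  -- numerator
  have hmain : |∫ t in a..B, t ^ κ * G t| ≤ 2 * (δ * B) * B ^ κ := by
    refine parts_bound hG hκ0 k5 hab fun t ht => ?_
    have : ∫ s in (0:ℝ)..t, G s = (∫ s in (0:ℝ)..t, g s) - c * t := by
      rw [hGdef, intervalIntegral.integral_sub (hg _ _) (by simp), intervalIntegral.integral_const,
        smul_eq_mul]
      ring
    rw [this]
    exact (hT1 t (k3.trans ht.1)).trans (mul_le_mul_of_nonneg_left ht.2 hδ.le)
  have hGabs : ∫ t in a..B, |G t| ≤ (K + |c|) * B := by
    calc ∫ t in a..B, |G t| ≤ ∫ t in (0:ℝ)..B, |G t| :=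
          intervalIntegral.integral_mono_interval k5.le hab le_rfl
            (Eventually.of_forall fun s => abs_nonneg _) (hG _ _).abs
      _ ≤ ∫ t in (0:ℝ)..B, (|g t| + |c|) :=
          intervalIntegral.integral_mono_on k8.le (hG _ _).abs ((hg _ _).abs.add (by simp))
            fun t _ => abs_sub _ _
      _ = (∫ t in (0:ℝ)..B, |g t|) + |c| * B := by
          rw [intervalIntegral.integral_add (hg _ _).abs (by simp),
            intervalIntegral.integral_const, smul_eq_mul]
          ring
      _ ≤ _ := by linarith
  have herr : |∫ t in a..B, G t * (ψ t - C * t ^ κ)| ≤ δ * B ^ κ * B := by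
    calc |∫ t in a..B, G t * (ψ t - C * t ^ κ)|
        ≤ ∫ t in a..B, |G t| * (C₁ * (1 + B ^ κ')) := by
          rw [← Real.norm_eq_abs]
          refine intervalIntegral.norm_integral_le_of_norm_le hab ?_ ((hG _ _).abs.mul_const _)
          refine Eventually.of_forall fun t ht => ?_
          have ht0 : 0 < t := k5.trans ht.1
          rw [Real.norm_eq_abs, abs_mul]
          refine mul_le_mul_of_nonneg_left ((hbound t ht0.le).trans ?_) (abs_nonneg _)
          have : t ^ κ' ≤ B ^ κ' := Real.rpow_le_rpow ht0.le ht.2 hκ'pos.le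
          gcongr
      _ = (∫ t in a..B, |G t|) * (C₁ * (1 + B ^ κ')) := by
          rw [intervalIntegral.integral_mul_const]
      _ ≤ ((K + |c|) * B) * (C₁ * (1 + B ^ κ')) := by
          gcongr
      _ = (C₁ * (K + |c|) * (1 + B ^ κ')) * B := by ring
      _ ≤ _ := by gcongr
  have hnum : (∫ t in a..B, g t * ψ t) - c * ∫ t in a..B, ψ t
      = C * (∫ t in a..B, t ^ κ * G t) + ∫ t in a..B, G t * (ψ t - C * t ^ κ) := by
    rw [← intervalIntegral.integral_const_mul, ← intervalIntegral.integral_const_mul,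
      ← intervalIntegral.integral_sub ((hg _ _).mul_continuousOn hψc) (hψi.const_mul c),
      ← intervalIntegral.integral_add]
    · refine intervalIntegral.integral_congr fun t _ => ?_
      simp only [hGdef]
      ring
    · exact ((hG _ _).continuousOn_mul hpc).const_mul C
    · exact (hG _ _).mul_continuousOn (hψc.sub (hpc.const_smul C))
  rw [Real.dist_eq]
  have hrew : (∫ t in a..B, ψ t)⁻¹ * (∫ t in a..B, g t * ψ t) - c
      = ((∫ t in a..B, g t * ψ t) - c * ∫ t in a..B, ψ t) / ∫ t in a..B, ψ t := by
    field_simp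
  rw [hrew, abs_div, abs_of_pos hD0, div_lt_iff₀ hD0, hnum]
  have hfin : |C * (∫ t in a..B, t ^ κ * G t) + ∫ t in a..B, G t * (ψ t - C * t ^ κ)|
      ≤ (2 * C + 1) * δ * (B ^ κ * B) := by
    refine (abs_add_le _ _).trans ?_
    rw [abs_mul, abs_of_pos hC]
    nlinarith
  have hde : (2 * C + 1) * δ = e * q / 2 := by
    rw [hδdef]; field_simp
  rw [hde] at hfin
  have hpos : 0 < B ^ κ * B := by positivity
  have : e * (q * (B ^ κ * B)) ≤ e * ∫ t in a..B, ψ t := by gcongr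
  nlinarith [mul_pos (mul_pos he hq0) hpos]

lemma sinh_shell (b ε : ℝ) (hb : 0 < b) (hε : 0 < ε) :
    ∃ η : ℝ, 0 < η ∧
      (∀ᶠ r in atTop, η * (2 * Real.sinh (b * (r + ε))) ≤ 2 * Real.sinh (b * r)) ∧
      (∀ᶠ r in atTop, η * (2 * Real.sinh (b * (r + ε))) ≤
        2 * Real.sinh (b * (r + ε)) - 2 * Real.sinh (b * r)) ∧
      Tendsto (fun r => 2 * Real.sinh (b * (r + ε))) atTop atTop := by
  have hsh : 0 < Real.sinh (b * ε) := Real.sinh_pos_iff.2 (by positivity)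
  have hch : 1 ≤ Real.cosh (b * ε) := Real.one_le_cosh _
  set S := Real.sinh (b * ε)
  set L := Real.cosh (b * ε) + 3 * S with hL
  have hL0 : 0 < L := by positivity
  have key : ∀ r, 1 ≤ r * b → 2 * Real.sinh (b * (r + ε)) ≤ L * (2 * Real.sinh (b * r)) ∧
      S * (2 * Real.sinh (b * r)) ≤ 2 * Real.sinh (b * (r + ε)) - 2 * Real.sinh (b * r) ∧
      0 ≤ Real.sinh (b * r) := by
    intro r hr
    have e1 : Real.sinh (b * (r + ε)) = Real.sinh (b * r) * Real.cosh (b * ε)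
        + Real.cosh (b * r) * S := by rw [mul_add, Real.sinh_add]
    have e2 : 1 ≤ Real.sinh (b * r) := (by linarith : 1 ≤ b * r).trans
      (Real.self_le_sinh_iff.2 (by linarith))
    have e3 : Real.cosh (b * r) ≤ 3 * Real.sinh (b * r) := by
      have := Real.cosh_sub_sinh (b * r)
      have h3 : Real.exp (-(b * r)) ≤ 1 := Real.exp_le_one_iff.2 (by linarith)
      linarith
    have e4 : Real.sinh (b * r) ≤ Real.cosh (b * r) := Real.sinh_lt_cosh _ |>.le
    refine ⟨?_, ?_, by linarith⟩
    · rw [e1, hL]; nlinarith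
    · rw [e1]; nlinarith
  have hev : ∀ᶠ r in atTop, 1 ≤ r * b :=
    (tendsto_id.atTop_mul_const hb).eventually_ge_atTop 1
  refine ⟨min 1 S / L, by positivity, ?_, ?_, ?_⟩
  · filter_upwards [hev] with r hr
    obtain ⟨h1, h2, h3⟩ := key r hr
    rw [div_mul_eq_mul_div, div_le_iff₀ hL0]
    have : min 1 S ≤ 1 := min_le_left _ _
    have h5 : 0 ≤ 2 * Real.sinh (b * (r + ε)) := by nlinarith
    nlinarith
  · filter_upwards [hev] with r hr
    obtain ⟨h1, h2, h3⟩ := key r hr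
    refine le_trans ?_ h2
    rw [div_mul_eq_mul_div, div_le_iff₀ hL0]
    have : min 1 S ≤ S := min_le_right _ _
    have h5 : 0 ≤ 2 * Real.sinh (b * (r + ε)) := by nlinarith
    nlinarith
  · have h1 : Tendsto (fun r : ℝ => b * (r + ε)) atTop atTop :=
      (tendsto_atTop_add_const_right _ _ tendsto_id).const_mul_atTop hb
    refine tendsto_atTop_mono' _ ?_ h1
    filter_upwards [eventually_ge_atTop 0] with r hr
    have h0 : 0 ≤ b * (r + ε) := by positivity
    have := Real.self_le_sinh_iff.2 h0
    linarith

/-- **Pointwise ergodic theorem for weighted averages over exponentially growing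
shells.**  Let `(h_t)` be a jointly measurable measure-preserving ergodic flow on a
standard probability space `(X,μ)` and let `ψ : [0,∞) → [0,∞)` be continuous with
`|ψ(t) − C t^κ| ≤ C₁ (1 + t^{κ'})` for constants `C > 0`, `κ > κ' > 0`, `C₁ ≥ 0`.
Fix `b > 0` and `ε > 0`.  Then for every `f ∈ L¹(X,μ)` the shell averages
`A_{r,ε} f(x) = (∫_{2 sinh(br)}^{2 sinh(b(r+ε))} ψ)⁻¹ ∫_{2 sinh(br)}^{2 sinh(b(r+ε))}
f(h_{-t} x) ψ(t) dt` converge to `∫ f dμ` for `μ`-a.e. `x` as `r → ∞`. -/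
theorem weighted_shell_averages_pointwise_ergodic
    (X : Type) [MeasurableSpace X] [StandardBorelSpace X]
    (μ : Measure X) [IsProbabilityMeasure μ]
    (h : ℝ → X → X)
    (h_zero : ∀ x, h 0 x = x)
    (h_add : ∀ s t x, h (s + t) x = h s (h t x))
    (h_meas : Measurable fun q : ℝ × X => h q.1 q.2)
    (h_mp : ∀ t : ℝ, MeasurePreserving (h t) μ μ)
    (h_erg : ∀ s : Set X, MeasurableSet s → (∀ t : ℝ, h t ⁻¹' s = s) → μ s = 0 ∨ μ s = 1)
    (ψ : ℝ → ℝ)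
    (hψ_cont : ContinuousOn ψ (Set.Ici 0))
    (hψ_nonneg : ∀ t : ℝ, 0 ≤ t → 0 ≤ ψ t)
    (C κ κ' C₁ : ℝ) (hC : 0 < C) (hκ'pos : 0 < κ') (hκ : κ' < κ) (hC₁ : 0 ≤ C₁)
    (hbound : ∀ t : ℝ, 0 ≤ t → |ψ t - C * t ^ κ| ≤ C₁ * (1 + t ^ κ'))
    (b ε : ℝ) (hb : 0 < b) (hε : 0 < ε)
    (f : X → ℝ) (hf : Integrable f μ) :
    ∀ᵐ x ∂μ, Tendsto
      (fun r : ℝ =>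
        (∫ t in (2 * Real.sinh (b * r))..(2 * Real.sinh (b * (r + ε))), ψ t)⁻¹ *
          ∫ t in (2 * Real.sinh (b * r))..(2 * Real.sinh (b * (r + ε))),
            f (h (-t) x) * ψ t)
      atTop (𝓝 (∫ y, f y ∂μ)) := by
  have hφ : IsFlow μ (fun t x => h (-t) x) :=
    { zero := fun x => by simp [h_zero]
      add := fun s t x => by simp only [neg_add]; exact h_add _ _ _
      meas := h_meas.comp ((measurable_fst.neg).prodMk measurable_snd)
      mp := fun t => h_mp (-t)
      erg := fun s hs hinv => h_erg s hs fun t => by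
        have := hinv (-t)
        simpa using this }
  set f' := hf.1.mk f with hf'
  have hff' : f =ᵐ[μ] f' := hf.1.ae_eq_mk
  have hfm : Measurable f' := hf.1.stronglyMeasurable_mk.measurable
  have hfi : Integrable f' μ := hf.congr hff'
  have hint : ∫ y, f y ∂μ = ∫ y, f' y ∂μ := integral_congr_ae hff'
  obtain ⟨η, hη, hlo, hgap, hhi⟩ := sinh_shell b ε hb hε
  filter_upwards [ae_orbit_congr hφ hff', birkhoff hφ hfm hfi, birkhoff hφ hfm.abs hfi.abs]
    with x hx h1 h2
  rw [hint]
  have := shell_lemma (g := fun t => f' (h (-t) x)) (c := ∫ y, f' y ∂μ)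
    (K := (∫ y, |f' y| ∂μ) + 1) h1.1 h1.2 ?_ ψ hψ_cont C κ κ' C₁ hC hκ'pos hκ hC₁ hbound
    (fun r => 2 * Real.sinh (b * r)) (fun r => 2 * Real.sinh (b * (r + ε))) η hη hlo hgap hhi
  · refine this.congr fun r => ?_
    congr 1
    refine intervalIntegral.integral_congr_ae ?_
    filter_upwards [hx] with t ht _
    rw [ht]
  · filter_upwards [h2.2 1 one_pos] with t ht
    have := (abs_le.1 ht).2
    simp only [orbS] at this
    linarith
end
end

section
/- Let ψ : [0,∞) → [0,∞) be a continuous function for which there exist constants C > 0, κ > κ' > 0 and C₁ ≥ 0 with |ψ(t) − C t^κ| ≤ C₁ (1 + t^{κ'}) for all t ≥ 0. Then for all b > 0 and ε > 0, the ratio (∫_0^{2 sinh(br)} ψ(t) dt) / (∫_{2 sinh(br)}^{2 sinh(b(r+ε))} ψ(t) dt) converges, as r → ∞, to 1 / (e^{(κ+1)bε} − 1). -/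
open Filter Topology

noncomputable section

lemma aux_mass (ψ : ℝ → ℝ)
    (hψ_cont : ContinuousOn ψ (Set.Ici 0))
    (C κ κ' C₁ : ℝ) (hκ'pos : 0 < κ') (hκ : κ' < κ)
    (hbound : ∀ t : ℝ, 0 ≤ t → |ψ t - C * t ^ κ| ≤ C₁ * (1 + t ^ κ')) :
    Tendsto (fun x : ℝ => (∫ t in (0:ℝ)..x, ψ t) / x ^ (κ + 1)) atTop (𝓝 (C / (κ + 1))) := by
  have hlim : Tendsto (fun x : ℝ => C₁ * (x ^ (-κ) + x ^ (-(κ - κ')) / (κ' + 1))) atTop (𝓝 0) := by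
    have h1 := tendsto_rpow_neg_atTop (show 0 < κ by linarith)
    have h2 := tendsto_rpow_neg_atTop (show 0 < κ - κ' by linarith)
    simpa using (h1.add (h2.div_const (κ' + 1))).const_mul C₁
  rw [tendsto_iff_norm_sub_tendsto_zero]
  refine squeeze_zero' (Eventually.of_forall fun _ => norm_nonneg _) ?_ hlim
  filter_upwards [eventually_gt_atTop 0] with x hx
  have hi : IntervalIntegrable ψ MeasureTheory.volume 0 x := by
    apply ContinuousOn.intervalIntegrable
    apply hψ_cont.mono
    rw [Set.uIcc_of_le hx.le]
    exact Set.Icc_subset_Ici_self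
  have hj : ∀ p : ℝ, 0 < p → IntervalIntegrable (fun t : ℝ => t ^ p) MeasureTheory.volume 0 x :=
    fun p hp => intervalIntegral.intervalIntegrable_rpow' (by linarith)
  have hjv : ∀ p : ℝ, 0 < p → ∫ t in (0:ℝ)..x, t ^ p = x ^ (p + 1) / (p + 1) := by
    intro p hp
    rw [integral_rpow (Or.inl (by linarith)), Real.zero_rpow (by linarith), sub_zero]
  have hκ0 : 0 < κ := by linarith
  have key : |(∫ t in (0:ℝ)..x, ψ t) - C * (x ^ (κ + 1) / (κ + 1))|
      ≤ C₁ * (x + x ^ (κ' + 1) / (κ' + 1)) := by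
    have e1 : (∫ t in (0:ℝ)..x, ψ t) - C * (x ^ (κ + 1) / (κ + 1))
        = ∫ t in (0:ℝ)..x, (ψ t - C * t ^ κ) := by
      rw [intervalIntegral.integral_sub hi ((hj κ hκ0).const_mul C),
        intervalIntegral.integral_const_mul, hjv κ hκ0]
    have e2 : C₁ * (x + x ^ (κ' + 1) / (κ' + 1)) = ∫ t in (0:ℝ)..x, C₁ * (1 + t ^ κ') := by
      rw [intervalIntegral.integral_const_mul,
        intervalIntegral.integral_add intervalIntegrable_const (hj κ' hκ'pos), hjv κ' hκ'pos]
      simp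
    rw [e1, e2]
    calc _ ≤ ∫ t in (0:ℝ)..x, |ψ t - C * t ^ κ| :=
          intervalIntegral.abs_integral_le_integral_abs hx.le
      _ ≤ _ := intervalIntegral.integral_mono_on hx.le (hi.sub ((hj κ hκ0).const_mul C)).abs
          ((intervalIntegrable_const.add (hj κ' hκ'pos)).const_mul C₁)
          (fun t ht => hbound t ht.1)
  have hp : 0 < x ^ (κ + 1) := Real.rpow_pos_of_pos hx _
  have e3 : (∫ t in (0:ℝ)..x, ψ t) / x ^ (κ + 1) - C / (κ + 1)
      = ((∫ t in (0:ℝ)..x, ψ t) - C * (x ^ (κ + 1) / (κ + 1))) / x ^ (κ + 1) := by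
    field_simp
  have e4 : x ^ (-κ) = x / x ^ (κ + 1) := by
    rw [show -κ = 1 - (κ + 1) by ring, Real.rpow_sub hx, Real.rpow_one]
  have e5 : x ^ (-(κ - κ')) = x ^ (κ' + 1) / x ^ (κ + 1) := by
    rw [show -(κ - κ') = (κ' + 1) - (κ + 1) by ring, Real.rpow_sub hx]
  rw [e3, Real.norm_eq_abs, abs_div, abs_of_pos hp, div_le_iff₀ hp, e4, e5]
  refine key.trans (le_of_eq ?_)
  field_simp

lemma aux_sinh (c : ℝ) : Tendsto (fun s : ℝ => (2 * Real.sinh (s + c)) / (2 * Real.sinh s))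
    atTop (𝓝 (Real.exp c)) := by
  have h0 : Tendsto (fun s : ℝ => Real.exp (-(2 * s))) atTop (𝓝 0) :=
    Real.tendsto_exp_neg_atTop_nhds_zero.comp (tendsto_id.const_mul_atTop (by norm_num : (0:ℝ) < 2))
  have h1 : Tendsto (fun s : ℝ => (Real.exp c - Real.exp (-c) * Real.exp (-(2 * s))) /
      (1 - Real.exp (-(2 * s)))) atTop (𝓝 (Real.exp c)) := by
    have := (tendsto_const_nhds (x := Real.exp c)).sub (h0.const_mul (Real.exp (-c)))
    have h2 := this.div ((tendsto_const_nhds (x := (1:ℝ))).sub h0) (by simp)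
    simp only [mul_zero, sub_zero, div_one] at h2
    exact h2
  refine h1.congr fun s => ?_
  have e1 : 2 * Real.sinh (s + c)
      = Real.exp s * (Real.exp c - Real.exp (-c) * Real.exp (-(2 * s))) := by
    rw [Real.sinh_eq, mul_sub, ← Real.exp_add, ← Real.exp_add, ← Real.exp_add]
    ring_nf
  have e2 : 2 * Real.sinh s = Real.exp s * (1 - Real.exp (-(2 * s))) := by
    rw [Real.sinh_eq, mul_sub, ← Real.exp_add]
    ring_nf
  rw [e1, e2, mul_div_mul_left _ _ (Real.exp_pos s).ne']

lemma aux_top : Tendsto (fun s : ℝ => 2 * Real.sinh s) atTop atTop := by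
  refine tendsto_atTop_mono' _ ?_ tendsto_id
  filter_upwards [eventually_ge_atTop 0] with s hs
  have := Real.self_le_sinh_iff.2 hs
  simp only [id]
  linarith

/-- **Asymptotic ratio of weighted masses of balls and shells.**
Let `ψ : [0,∞) → [0,∞)` be continuous with `|ψ(t) − C t^κ| ≤ C₁ (1 + t^{κ'})` for
constants `C > 0`, `κ > κ' > 0`, `C₁ ≥ 0`.  Then for all `b > 0` and `ε > 0`,
`(∫_0^{2 sinh(br)} ψ) / (∫_{2 sinh(br)}^{2 sinh(b(r+ε))} ψ) → 1 / (e^{(κ+1)bε} − 1)`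
as `r → ∞`. -/
theorem ball_shell_mass_ratio_tendsto
    (ψ : ℝ → ℝ)
    (hψ_cont : ContinuousOn ψ (Set.Ici 0))
    (hψ_nonneg : ∀ t : ℝ, 0 ≤ t → 0 ≤ ψ t)
    (C κ κ' C₁ : ℝ) (hC : 0 < C) (hκ'pos : 0 < κ') (hκ : κ' < κ) (hC₁ : 0 ≤ C₁)
    (hbound : ∀ t : ℝ, 0 ≤ t → |ψ t - C * t ^ κ| ≤ C₁ * (1 + t ^ κ'))
    (b ε : ℝ) (hb : 0 < b) (hε : 0 < ε) :
    Tendsto (fun r : ℝ =>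
        (∫ t in (0:ℝ)..(2 * Real.sinh (b * r)), ψ t) /
          (∫ t in (2 * Real.sinh (b * r))..(2 * Real.sinh (b * (r + ε))), ψ t))
      atTop (𝓝 (1 / (Real.exp ((κ + 1) * b * ε) - 1))) := by
  have hF := aux_mass ψ hψ_cont C κ κ' C₁ hκ'pos hκ hbound
  have hbr : Tendsto (fun r : ℝ => b * r) atTop atTop := tendsto_id.const_mul_atTop hb
  have hbr' : Tendsto (fun r : ℝ => b * (r + ε)) atTop atTop :=
    (tendsto_atTop_add_const_right _ ε tendsto_id).const_mul_atTop hb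
  have hx := aux_top.comp hbr
  have hy := aux_top.comp hbr'
  have hq : Tendsto (fun r : ℝ => ((2 * Real.sinh (b * (r + ε))) / (2 * Real.sinh (b * r))) ^ (κ + 1))
      atTop (𝓝 (Real.exp ((κ + 1) * b * ε))) := by
    have h := ((aux_sinh (b * ε)).comp hbr).rpow_const (p := κ + 1)
      (Or.inl (Real.exp_pos _).ne')
    rw [← Real.exp_mul, show b * ε * (κ + 1) = (κ + 1) * b * ε by ring] at h
    refine h.congr fun r => ?_
    simp only [Function.comp, mul_add]
  have hA : 0 < C / (κ + 1) := div_pos hC (by linarith)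
  have hE : 1 < Real.exp ((κ + 1) * b * ε) :=
    Real.one_lt_exp_iff.2 (mul_pos (mul_pos (by linarith) hb) hε)
  have hne : C / (κ + 1) * Real.exp ((κ + 1) * b * ε) - C / (κ + 1) ≠ 0 := by
    have := mul_pos hA (sub_pos.2 hE)
    intro h
    linarith
  have hmain := (hF.comp hx).div (((hF.comp hy).mul hq).sub (hF.comp hx)) hne
  have hl : C / (κ + 1) / (C / (κ + 1) * Real.exp ((κ + 1) * b * ε) - C / (κ + 1))
      = 1 / (Real.exp ((κ + 1) * b * ε) - 1) := by
    have := (sub_pos.2 hE).ne'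
    rw [div_eq_div_iff hne this]
    ring
  rw [hl] at hmain
  refine hmain.congr' ?_
  filter_upwards [hx.eventually_gt_atTop 0, hy.eventually_gt_atTop 0] with r h1 h2
  simp only [Function.comp, Pi.div_apply] at h1 h2 ⊢
  generalize 2 * Real.sinh (b * r) = x at *
  generalize 2 * Real.sinh (b * (r + ε)) = y at *
  have hi : ∀ z : ℝ, 0 < z → IntervalIntegrable ψ MeasureTheory.volume 0 z := by
    intro z hz
    apply ContinuousOn.intervalIntegrable
    apply hψ_cont.mono
    rw [Set.uIcc_of_le hz.le]
    exact Set.Icc_subset_Ici_self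
  rw [← intervalIntegral.integral_interval_sub_left (hi y h2) (hi x h1),
    Real.div_rpow h2.le h1.le]
  have p1 := Real.rpow_pos_of_pos h1 (κ + 1)
  have p2 := Real.rpow_pos_of_pos h2 (κ + 1)
  rw [div_mul_div_cancel₀ p2.ne', ← sub_div, div_div_div_cancel_right₀ p1.ne']
end
end
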